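/- arXiv:1605.04284 — 11 statements merged into one kernel-verified Lean document; each statement's English description precedes it below -/
import Mathlib

section
/- Let H = (V,E) be a hypergraph, let k ≥ 1 and p ≥ 1 be integers, and let f ≥ 1 be a real number. Suppose there is a set V* ⊆ V with |V*| = k such that at least p hyperedges of E are covered by V*. Suppose moreover that for every subset E₀ ⊆ E and every integer p' ≥ 1 such that at least p' hyperedges of E₀ are covered by V*, there exists a nonempty set V' ⊆ V with |V'| ≤ f·k such that the number of hyperedges of E₀ covered by V' is at least |V'|·p'/(k·f). Then there exists a set E' ⊆ E with |E'| ≥ p such that |⋃_{e∈E'} e| ≤ k·f·(ln p + 1). -/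
open Finset

/-!
Greedy selection. While `q` hyperedges are still wanted, the hypothesis supplies a batch `C` of new
hyperedges whose union costs at most `c · |C| / q`, where `c = k · f`. If the batch falls short of
`q`, then `|C| / q ≤ log q - log (q - |C|)`, so its cost is paid for by the decrease of `c · log q`
and one continues with the remaining hyperedges, among which at least `q - |C|` are still covered by
`V*`, whether or not those of `C` were. The last batch, which may overshoot, costs at most `c`: this
is the summand `1` in the bound.
-/

theorem sub_div_le_log_sub_log {a b : ℝ} (ha : 0 < a) (hb : 0 < b) :
    (b - a) / b ≤ Real.log b - Real.log a := by
  have h := Real.one_sub_inv_le_log_of_pos (div_pos hb ha)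
  rwa [inv_div, Real.log_div hb.ne' ha.ne', one_sub_div hb.ne'] at h

section Greedy

variable {β : Type*} [DecidableEq β]

theorem card_filter_sub_card_le_card_filter_sdiff (P : β → Prop) [DecidablePred P]
    (E C : Finset β) : #{e ∈ E | P e} - #C ≤ #{e ∈ E \ C | P e} := by
  have hfilter : {e ∈ E \ C | P e} = {e ∈ E | P e} \ C := by grind
  rw [hfilter]
  exact le_card_sdiff _ _

theorem le_card_union_of_sub_card_le {F C : Finset β} {q : ℕ} (hFC : Disjoint F C)
    (hq : q - #C ≤ #F) : q ≤ #(F ∪ C) := by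
  rw [card_union_of_disjoint hFC]
  exact Nat.sub_le_iff_le_add.1 hq

theorem add_le_mul_log_add_one {c q m x y : ℝ} (hc : 0 ≤ c) (hm : 0 ≤ m) (hmq : m < q)
    (hx : x ≤ c * (Real.log (q - m) + 1)) (hy : y * q ≤ c * m) :
    x + y ≤ c * (Real.log q + 1) := by
  have hq : 0 < q := hm.trans_lt hmq
  have hlog : m / q ≤ Real.log q - Real.log (q - m) := by
    simpa only [sub_sub_cancel] using sub_div_le_log_sub_log (sub_pos.2 hmq) hq
  calc
    x + y ≤ c * (Real.log (q - m) + 1) + c * (m / q) :=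
      add_le_add hx (by rwa [← mul_div_assoc, le_div_iff₀ hq])
    _ ≤ c * (Real.log (q - m) + 1) + c * (Real.log q - Real.log (q - m)) := by gcongr
    _ = c * (Real.log q + 1) := by ring

theorem exists_subset_le_card_cost_le_mul_log_add_one {cost : Finset β → ℝ}
    (hcost : ∀ A B, cost (A ∪ B) ≤ cost A + cost B) (P : β → Prop) [DecidablePred P]
    {c : ℝ} (hc : 0 ≤ c) {q : ℕ} (hq : 1 ≤ q) {E : Finset β} (hqE : q ≤ #{e ∈ E | P e})
    (hbatch : ∀ E₀ ⊆ E, ∀ r : ℕ, 1 ≤ r → r ≤ #{e ∈ E₀ | P e} →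
      ∃ C ⊆ E₀, C.Nonempty ∧ cost C ≤ c ∧ cost C * r ≤ c * #C) :
    ∃ F ⊆ E, q ≤ #F ∧ cost F ≤ c * (Real.log q + 1) := by
  induction q using Nat.strong_induction_on generalizing E with
  | _ q ih =>
    obtain ⟨C, hCE, hCne, hCc, hCratio⟩ := hbatch E Subset.rfl q hq hqE
    obtain hqC | hCq := le_or_gt q #C
    · have hlog : 0 ≤ Real.log q := Real.log_natCast_nonneg q
      exact ⟨C, hCE, hqC, hCc.trans (le_mul_of_one_le_right hc (by linarith))⟩
    · have hremaining : q - #C ≤ #{e ∈ E \ C | P e} :=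
        (Nat.sub_le_sub_right hqE _).trans (card_filter_sub_card_le_card_filter_sdiff P E C)
      obtain ⟨F, hFE, hqF, hFcost⟩ := ih (q - #C) (Nat.sub_lt hq hCne.card_pos)
        (Nat.sub_pos_of_lt hCq) hremaining fun E₀ hE₀ => hbatch E₀ (hE₀.trans sdiff_subset)
      rw [Nat.cast_sub hCq.le] at hFcost
      exact ⟨F ∪ C, union_subset (hFE.trans sdiff_subset) hCE,
        le_card_union_of_sub_card_le (disjoint_of_subset_left hFE sdiff_disjoint) hqF,
        (hcost F C).trans (add_le_mul_log_add_one hc (Nat.cast_nonneg _) (Nat.cast_lt.2 hCq)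
          hFcost hCratio)⟩

end Greedy

section Hypergraph

variable {α : Type*} [DecidableEq α]

theorem card_biUnion_union_le (A B : Finset (Finset α)) :
    #((A ∪ B).biUnion id) ≤ #(A.biUnion id) + #(B.biUnion id) := by
  rw [union_biUnion]
  exact card_union_le _ _

theorem card_biUnion_filter_subset_le (E : Finset (Finset α)) (W : Finset α) :
    #({e ∈ E | e ⊆ W}.biUnion id) ≤ #W :=
  card_le_card (biUnion_subset.2 fun _ he => (mem_filter.1 he).2)

theorem stmt_0_general (E : Finset (Finset α)) (P : Finset α → Prop) [DecidablePred P]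
    {p : ℕ} (hp : 1 ≤ p) {c : ℝ} (hc : 0 < c) (hpE : p ≤ #{e ∈ E | P e})
    (hdense : ∀ E₀ ⊆ E, ∀ q : ℕ, 1 ≤ q → q ≤ #{e ∈ E₀ | P e} →
      ∃ W : Finset α, W.Nonempty ∧ (#W : ℝ) ≤ c ∧ (#W : ℝ) * q / c ≤ #{e ∈ E₀ | e ⊆ W}) :
    ∃ E' ⊆ E, p ≤ #E' ∧ (#(E'.biUnion id) : ℝ) ≤ c * (Real.log p + 1) := by
  refine exists_subset_le_card_cost_le_mul_log_add_one (cost := fun A => #(A.biUnion id))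
    (fun A B => mod_cast card_biUnion_union_le A B) P hc.le hp hpE fun E₀ hE₀ q hq hqE₀ => ?_
  obtain ⟨W, hWne, hWc, hWratio⟩ := hdense E₀ hE₀ q hq hqE₀
  have hcost : (#({e ∈ E₀ | e ⊆ W}.biUnion id) : ℝ) ≤ #W :=
    mod_cast card_biUnion_filter_subset_le E₀ W
  have hcovered : 0 < #{e ∈ E₀ | e ⊆ W} :=
    mod_cast (show (0 : ℝ) < #W * q / c by positivity).trans_le hWratio
  exact ⟨{e ∈ E₀ | e ⊆ W}, filter_subset _ _, card_pos.1 hcovered, hcost.trans hWc,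
    (mul_le_mul_of_nonneg_right hcost q.cast_nonneg).trans ((div_le_iff₀' hc).1 hWratio)⟩

end Hypergraph

/-- If a hypergraph `(V, E)` has a set `V*` of `k` vertices covering at
least `p` hyperedges, and one can always find (in any subcollection `E₀` still containing
`p'` hyperedges covered by `V*`) a nonempty vertex set `V'` of size at most `f·k` covering
at least `|V'|·p'/(k·f)` hyperedges of `E₀`, then there are at least `p` hyperedges of `E`
whose union has size at most `k·f·(ln p + 1)`. -/
theorem stmt_0 {α : Type*} [DecidableEq α]
    (V : Finset α) (E : Finset (Finset α)) (hEV : ∀ e ∈ E, e ⊆ V)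
    (k p : ℕ) (hk : 1 ≤ k) (hp : 1 ≤ p) (f : ℝ) (hf : 1 ≤ f)
    (Vstar : Finset α) (hVstar : Vstar ⊆ V) (hVcard : Vstar.card = k)
    (hcov : p ≤ (E.filter (fun e => e ⊆ Vstar)).card)
    (halg : ∀ E₀ ⊆ E, ∀ p' : ℕ, 1 ≤ p' →
      p' ≤ (E₀.filter (fun e => e ⊆ Vstar)).card →
      ∃ V' ⊆ V, V'.Nonempty ∧ (V'.card : ℝ) ≤ f * k ∧
        (V'.card : ℝ) * p' / (k * f) ≤ ((E₀.filter (fun e => e ⊆ V')).card : ℝ)) :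
    ∃ E' ⊆ E, p ≤ E'.card ∧
      ((E'.biUnion id).card : ℝ) ≤ k * f * (Real.log p + 1) := by
  refine stmt_0_general E (· ⊆ Vstar) hp (by positivity) hcov fun E₀ hE₀ q hq hqE₀ => ?_
  obtain ⟨W, -, hWne, hWcard, hWratio⟩ := halg E₀ hE₀ q hq hqE₀
  exact ⟨W, hWne, mul_comm f k ▸ hWcard, hWratio⟩
end

section
/- Let G = (E, V, F) be a bipartite graph with parts E and V, where |E| = m ≥ 1. Suppose OPT ⊆ E satisfies |OPT| = p and |Γ(OPT)| = r. Let ∅ = E'_0 ⊆ E'_1 ⊆ ⋯ ⊆ E'_l ⊆ E and nonempty sets E''_0, …, E''_{l−1} satisfy, for each i < l: (a) |E'_i| < p − √m; (b) E''_i ⊆ E ∖ E'_i and E''_i has minimum expansion among nonempty subsets of E ∖ E'_i, i.e. |Γ(E''_i)|·|X| ≤ |Γ(X)|·|E''_i| for every nonempty X ⊆ E ∖ E'_i; (c) if |E'_i| + |E''_i| ≤ p then E'_{i+1} = E'_i ∪ E''_i, and otherwise i = l−1 and E'_l consists of E'_{l−1} together with exactly p − |E'_{l−1}| elements of E''_{l−1}.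 Suppose also that p − √m ≤ |E'_l| ≤ p. Let F' ⊆ E ∖ E'_l be a set of p − |E'_l| elements such that every element of F' has degree (in G) at most the degree of every element of (E ∖ E'_l) ∖ F'. Then |Γ(E'_l ∪ F')| ≤ 2√m · r. -/
open Finset

/-- The neighborhood `Γ(X)` of a set `X` of left vertices in the bipartite graph with
edge set `F`. -/
def nbr {ε ν : Type*} [DecidableEq ε] [DecidableEq ν]
    (F : Finset (ε × ν)) (X : Finset ε) : Finset ν :=
  (F.filter (fun q => q.1 ∈ X)).image Prod.snd

/-!
As long as fewer than `p - t` elements have been collected, at least `t` elements of `OPT` are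
still available, and they have at most `r` neighbors. Minimality therefore bounds the expansion of
every greedy block by `r / t`. The blocks are disjoint, so this bound passes to their union, which
has at most `m` elements: the greedy phase contributes at most `(m / t) * r` neighbors.
Afterwards at most `t` elements are missing, and by counting each of the chosen ones has degree at
most that of some available element of `OPT`, hence at most `r`: they contribute at most `t * r`.
The value `t = √m` balances the two contributions.
-/

section

variable {ε ν : Type*} [DecidableEq ε] [DecidableEq ν] {F : Finset (ε × ν)} {A B O : Finset ε}

lemma nbr_eq_biUnion (F : Finset (ε × ν)) (X : Finset ε) :
    nbr F X = X.biUnion fun e => nbr F {e} := by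
  ext v
  simp [nbr, and_comm]

lemma nbr_empty (F : Finset (ε × ν)) : nbr F ∅ = ∅ := by
  simp [nbr]

lemma nbr_mono (F : Finset (ε × ν)) : Monotone (nbr F) := fun X Y hXY => by
  rw [nbr_eq_biUnion F X, nbr_eq_biUnion F Y]
  exact biUnion_subset_biUnion_of_subset_left _ hXY

lemma nbr_union (F : Finset (ε × ν)) (X Y : Finset ε) :
    nbr F (X ∪ Y) = nbr F X ∪ nbr F Y := by
  rw [nbr_eq_biUnion F (X ∪ Y), union_biUnion, ← nbr_eq_biUnion, ← nbr_eq_biUnion]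

lemma card_nbr_union_le (F : Finset (ε × ν)) (X Y : Finset ε) :
    #(nbr F (X ∪ Y)) ≤ #(nbr F X) + #(nbr F Y) := by
  rw [nbr_union]
  exact card_union_le _ _

lemma card_nbr_le_card_mul {X : Finset ε} {d : ℕ} (h : ∀ e ∈ X, #(nbr F {e}) ≤ d) :
    #(nbr F X) ≤ #X * d := by
  rw [nbr_eq_biUnion]
  exact card_biUnion_le_card_mul X _ d h

lemma card_nbr_union_le_mul_of_disjoint {c : ℝ} (hAB : Disjoint A B)
    (hA : (#(nbr F A) : ℝ) ≤ c * #A) (hB : (#(nbr F B) : ℝ) ≤ c * #B) :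
    (#(nbr F (A ∪ B)) : ℝ) ≤ c * #(A ∪ B) :=
  calc (#(nbr F (A ∪ B)) : ℝ) ≤ #(nbr F A) + #(nbr F B) := mod_cast card_nbr_union_le F A B
    _ ≤ c * #A + c * #B := add_le_add hA hB
    _ = c * #(A ∪ B) := by rw [card_union_of_disjoint hAB, Nat.cast_add, mul_add]

/-- `B` avoids `A` and minimizes the expansion `|Γ(X)| / |X|` among the nonempty sets `X` of left
vertices avoiding `A`. The inequality between expansions is cross-multiplied, so `B = ∅` is
allowed. -/
structure IsMinExpansion (F : Finset (ε × ν)) (A B : Finset ε) : Prop where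
  disjoint : Disjoint A B
  card_nbr_mul_le : ∀ X, Disjoint A X → X.Nonempty → #(nbr F B) * #X ≤ #(nbr F X) * #B

namespace IsMinExpansion

lemma card_nbr_mul_card_sdiff_le (h : IsMinExpansion F A B) (O : Finset ε) :
    #(nbr F B) * #(O \ A) ≤ #(nbr F O) * #B := by
  rcases (O \ A).eq_empty_or_nonempty with hO | hO
  · simp [hO]
  · calc #(nbr F B) * #(O \ A) ≤ #(nbr F (O \ A)) * #B :=
          h.card_nbr_mul_le _ disjoint_sdiff hO
      _ ≤ #(nbr F O) * #B := by gcongr; exact nbr_mono F sdiff_subset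

lemma card_nbr_le_div_mul (h : IsMinExpansion F A B) {t : ℝ} (ht : 0 < t)
    (hO : t ≤ #(O \ A)) : (#(nbr F B) : ℝ) ≤ #(nbr F O) / t * #B := by
  rw [div_mul_eq_mul_div, le_div_iff₀ ht]
  calc (#(nbr F B) : ℝ) * t ≤ #(nbr F B) * #(O \ A) := by gcongr
    _ ≤ #(nbr F O) * #B := mod_cast h.card_nbr_mul_card_sdiff_le O

end IsMinExpansion

/-- A run of the greedy algorithm with `l` rounds: round `i` adds the block `E'' i`, of minimum
expansion among the sets avoiding `E' i`, to the set `E' i` collected so far. Only the last round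
may add a proper part of its block. -/
structure GreedyRun (F : Finset (ε × ν)) (l : ℕ) (E' E'' : ℕ → Finset ε) : Prop where
  zero : E' 0 = ∅
  isMinExpansion : ∀ i < l, IsMinExpansion F (E' i) (E'' i)
  succ_eq : ∀ i, i + 1 < l → E' (i + 1) = E' i ∪ E'' i
  succ_subset : ∀ i < l, E' (i + 1) ⊆ E' i ∪ E'' i

namespace GreedyRun

variable {l : ℕ} {E' E'' : ℕ → Finset ε}

lemma of_truncated_step [Fintype ε] {p : ℕ} (h0 : E' 0 = ∅)
    (hsub : ∀ i < l, E'' i ⊆ (E' i)ᶜ)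
    (hmin : ∀ i < l, ∀ X ⊆ (E' i)ᶜ, X.Nonempty → #(nbr F (E'' i)) * #X ≤ #(nbr F X) * #(E'' i))
    (hstep : ∀ i < l,
      if #(E' i) + #(E'' i) ≤ p then E' (i + 1) = E' i ∪ E'' i
      else i = l - 1 ∧ ∃ D ⊆ E'' i, #D = p - #(E' i) ∧ E' (i + 1) = E' i ∪ D) :
    GreedyRun F l E' E'' where
  zero := h0
  isMinExpansion i hi :=
    ⟨subset_compl_iff_disjoint_left.mp (hsub i hi),
      fun X hX => hmin i hi X (subset_compl_iff_disjoint_left.mpr hX)⟩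
  succ_eq i hi := by
    have hs := hstep i (by omega)
    split_ifs at hs
    · exact hs
    · omega
  succ_subset i hi := by
    have hs := hstep i hi
    split_ifs at hs
    · exact hs.subset
    · obtain ⟨-, D, hD, -, hE⟩ := hs
      exact hE ▸ union_subset_union_right hD

lemma card_nbr_union_le_mul (h : GreedyRun F l E' E'') {c : ℝ}
    (hc : ∀ i < l, (#(nbr F (E'' i)) : ℝ) ≤ c * #(E'' i)) :
    ∀ i < l, (#(nbr F (E' i ∪ E'' i)) : ℝ) ≤ c * #(E' i ∪ E'' i) := by
  intro i hi
  refine card_nbr_union_le_mul_of_disjoint (h.isMinExpansion i hi).disjoint ?_ (hc i hi)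
  induction i with
  | zero => simp [h.zero, nbr_empty]
  | succ i ih =>
    have hi' : i < l := by omega
    rw [h.succ_eq i hi]
    exact card_nbr_union_le_mul_of_disjoint (h.isMinExpansion i hi').disjoint (ih hi') (hc i hi')

lemma card_nbr_le_mul (h : GreedyRun F l E' E'') {c : ℝ} (hc0 : 0 ≤ c)
    (hc : ∀ i < l, (#(nbr F (E'' i)) : ℝ) ≤ c * #(E'' i))
    {m : ℕ} (hm : ∀ i < l, #(E' i ∪ E'' i) ≤ m) :
    (#(nbr F (E' l)) : ℝ) ≤ c * m := by
  rcases l with _ | k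
  · simp only [h.zero, nbr_empty, card_empty, Nat.cast_zero]
    positivity
  · have hk : k < k + 1 := k.lt_succ_self
    calc (#(nbr F (E' (k + 1))) : ℝ) ≤ #(nbr F (E' k ∪ E'' k)) := by
          gcongr
          exact nbr_mono F (h.succ_subset k hk)
      _ ≤ c * #(E' k ∪ E'' k) := h.card_nbr_union_le_mul hc k hk
      _ ≤ c * m := by gcongr; exact hm k hk

end GreedyRun

lemma exists_mem_le_of_card_le {α β : Type*} [Preorder β] {S T : Finset α} {d : α → β}
    (hcard : #S ≤ #T) (hle : ∀ e ∈ S, ∀ e' ∈ T, e' ∉ S → d e ≤ d e') {e : α} (he : e ∈ S) :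
    ∃ e' ∈ T, d e ≤ d e' := by
  by_cases hTS : T ⊆ S
  · exact ⟨e, eq_of_subset_of_card_le hTS hcard ▸ he, le_rfl⟩
  · obtain ⟨e', he'T, he'S⟩ := not_subset.mp hTS
    exact ⟨e', he'T, hle e he e' he'T he'S⟩

lemma card_nbr_le_card_mul_card_nbr {S : Finset ε} (hcard : #S ≤ #(O \ A))
    (hdeg : ∀ e ∈ S, ∀ e' ∉ A, e' ∉ S → #(nbr F {e}) ≤ #(nbr F {e'})) :
    #(nbr F S) ≤ #S * #(nbr F O) := by
  refine card_nbr_le_card_mul fun e he => ?_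
  obtain ⟨x, hx, hex⟩ : ∃ x ∈ O \ A, #(nbr F {e}) ≤ #(nbr F {x}) :=
    exists_mem_le_of_card_le hcard
      (fun e he e' he' => hdeg e he e' (mem_sdiff.mp he').2) he
  exact hex.trans
    (card_le_card (nbr_mono F (singleton_subset_iff.mpr (mem_sdiff.mp hx).1)))

theorem stmt_1_general {l : ℕ} {E' E'' : ℕ → Finset ε} (hrun : GreedyRun F l E' E'')
    {t : ℝ} (ht : 0 < t) {m : ℕ} (hm : ∀ i < l, #(E' i ∪ E'' i) ≤ m) (OPT : Finset ε)
    (hround : ∀ i < l, (#(E' i) : ℝ) ≤ #OPT - t) (hlow : (#OPT : ℝ) - t ≤ #(E' l))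
    (F' : Finset ε) (hF' : #F' + #(E' l) ≤ #OPT)
    (hdeg : ∀ e ∈ F', ∀ e' ∉ E' l, e' ∉ F' → #(nbr F {e}) ≤ #(nbr F {e'})) :
    (#(nbr F (E' l ∪ F')) : ℝ) ≤ (m / t + t) * #(nbr F OPT) := by
  have hremaining (X : Finset ε) : #OPT ≤ #(OPT \ X) + #X := by
    have := le_card_sdiff X OPT
    omega
  have hblock : ∀ i < l, (#(nbr F (E'' i)) : ℝ) ≤ #(nbr F OPT) / t * #(E'' i) := fun i hi => by
    have hX : (#OPT : ℝ) ≤ #(OPT \ E' i) + #(E' i) := mod_cast hremaining (E' i)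
    exact (hrun.isMinExpansion i hi).card_nbr_le_div_mul ht (by linarith [hround i hi])
  have hgreedy : (#(nbr F (E' l)) : ℝ) ≤ #(nbr F OPT) / t * m :=
    hrun.card_nbr_le_mul (by positivity) hblock hm
  have hF't : (#F' : ℝ) ≤ t := by
    have hF'ℝ : (#F' : ℝ) + #(E' l) ≤ #OPT := mod_cast hF'
    linarith
  have hfill : (#(nbr F F') : ℝ) ≤ t * #(nbr F OPT) :=
    calc (#(nbr F F') : ℝ) ≤ #F' * #(nbr F OPT) :=
          mod_cast card_nbr_le_card_mul_card_nbr (by linarith [hremaining (E' l)]) hdeg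
      _ ≤ t * #(nbr F OPT) := by gcongr
  calc (#(nbr F (E' l ∪ F')) : ℝ) ≤ #(nbr F (E' l)) + #(nbr F F') :=
        mod_cast card_nbr_union_le F (E' l) F'
    _ ≤ #(nbr F OPT) / t * m + t * #(nbr F OPT) := add_le_add hgreedy hfill
    _ = (m / t + t) * #(nbr F OPT) := by ring

end

/-- Correctness of the greedy minimum-expansion algorithm for
Minimum `p`-Union: the final set `E'_l ∪ F'` has neighborhood of size at most `2√m·r`. -/
theorem stmt_1 {ε ν : Type*} [Fintype ε] [Fintype ν] [DecidableEq ε] [DecidableEq ν]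
    (F : Finset (ε × ν)) (m : ℕ) (hm : m = Fintype.card ε) (hm1 : 1 ≤ m)
    (OPT : Finset ε) (p r : ℕ) (hOPT : OPT.card = p) (hr : (nbr F OPT).card = r)
    (l : ℕ) (E' : ℕ → Finset ε) (E'' : ℕ → Finset ε)
    (h0 : E' 0 = ∅)
    (hchain : ∀ i < l, E' i ⊆ E' (i + 1))
    (hne : ∀ i < l, (E'' i).Nonempty)
    (ha : ∀ i < l, ((E' i).card : ℝ) < (p : ℝ) - Real.sqrt m)
    (hsub : ∀ i < l, E'' i ⊆ (E' i)ᶜ)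
    (hmin : ∀ i < l, ∀ X ⊆ (E' i)ᶜ, X.Nonempty →
      (nbr F (E'' i)).card * X.card ≤ (nbr F X).card * (E'' i).card)
    (hstep : ∀ i < l,
      if (E' i).card + (E'' i).card ≤ p then E' (i + 1) = E' i ∪ E'' i
      else i = l - 1 ∧ ∃ D ⊆ E'' i, D.card = p - (E' i).card ∧ E' (i + 1) = E' i ∪ D)
    (hlow : (p : ℝ) - Real.sqrt m ≤ ((E' l).card : ℝ))
    (hup : (E' l).card ≤ p)
    (F' : Finset ε) (hF'sub : F' ⊆ (E' l)ᶜ)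
    (hF'card : F'.card = p - (E' l).card)
    (hdeg : ∀ e ∈ F', ∀ e' ∈ (E' l)ᶜ \ F',
      (nbr F {e}).card ≤ (nbr F {e'}).card) :
    ((nbr F (E' l ∪ F')).card : ℝ) ≤ 2 * Real.sqrt m * r := by
  subst hm hOPT hr
  simpa only [Real.div_sqrt, ← two_mul] using
    stmt_1_general (.of_truncated_step h0 hsub hmin hstep) (by positivity)
      (fun _ _ => card_le_univ _) OPT (fun i hi => (ha i hi).le) hlow F' (by omega)
      (fun e he e' hE hF => hdeg e he e' (by simp [hE, hF]))
end

section
/- Let H = (V,E) be a hypergraph with V and E finite and E nonempty. Let y : E → ℝ be nonnegative with ∑_{e∈E} y_e = 1, and let x : V → ℝ be nonnegative with x_i ≥ y_e whenever e ∈ E and i ∈ e. Then there exists a real number r > 0 such that the set E₀ = { e ∈ E : y_e ≥ r } is nonempty and |⋃_{e∈E₀} e| ≤ (∑_{i∈V} x_i) · |E₀|. -/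
open Finset

/-! The sum of the positive parts `(f i - a)⁺` is the area above height `a` under the superlevel
counts `r ↦ #{i | r ≤ f i}`, so comparing these counts for two families compares their sums.
Let `r` be a positive weight `y e` minimizing the ratio of the number of vertices with `r ≤ x i`
to the number of edges with `r ≤ y e`, and let `c` be this least ratio. Then `c * ∑ y ≤ ∑ x`, and
every vertex of an edge with `r ≤ y e` has `r ≤ x i`. -/

section SuperlevelSums

variable {K ι κ : Type*} [CommRing K] [LinearOrder K] [IsOrderedRing K]

lemma sub_mul_card_superlevel_add_sum_posPart_le (s : Finset ι) (f : ι → K) {a b : K}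
    (hab : a ≤ b) :
    (b - a) * #{i ∈ s | b ≤ f i} + ∑ i ∈ s, (f i - b)⁺ ≤ ∑ i ∈ s, (f i - a)⁺ := by
  rw [← sum_boole, mul_sum, ← sum_add_distrib]
  refine sum_le_sum fun i _ => ?_
  split_ifs with hb
  · rw [posPart_of_nonneg (sub_nonneg.2 hb), posPart_of_nonneg (sub_nonneg.2 (hab.trans hb))]
    exact le_of_eq (by ring)
  · rw [mul_zero, zero_add]
    exact posPart_mono (sub_le_sub_left hab _)

lemma sum_posPart_eq_sub_mul_card_superlevel_add (s : Finset ι) (f : ι → K) {a b : K}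
    (hab : a ≤ b) (hgap : ∀ i ∈ s, a < f i → b ≤ f i) :
    ∑ i ∈ s, (f i - a)⁺ = (b - a) * #{i ∈ s | b ≤ f i} + ∑ i ∈ s, (f i - b)⁺ := by
  rw [← sum_boole, mul_sum, ← sum_add_distrib]
  refine sum_congr rfl fun i hi => ?_
  split_ifs with hb
  · rw [posPart_of_nonneg (sub_nonneg.2 hb), posPart_of_nonneg (sub_nonneg.2 (hab.trans hb))]
    ring
  · have ha : f i ≤ a := not_lt.1 fun ha => hb (hgap i hi ha)
    rw [posPart_of_nonpos (sub_nonpos.2 ha), posPart_of_nonpos (sub_nonpos.2 (ha.trans hab)),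
      mul_zero, zero_add]

lemma mul_sum_posPart_le_of_mul_card_superlevel_le (s : Finset ι) (t : Finset κ) (f : ι → K)
    (g : κ → K) (c a : K)
    (hcard : ∀ j ∈ s, a < f j → c * #{i ∈ s | f j ≤ f i} ≤ #{k ∈ t | f j ≤ g k}) :
    c * ∑ i ∈ s, (f i - a)⁺ ≤ ∑ k ∈ t, (g k - a)⁺ := by
  induction hn : #{i ∈ s | a < f i} using Nat.strong_induction_on generalizing a with
  | _ n ih =>
  obtain hempty | hne := {i ∈ s | a < f i}.eq_empty_or_nonempty
  · have hzero : ∑ i ∈ s, (f i - a)⁺ = 0 := sum_eq_zero fun i hi =>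
      posPart_of_nonpos (sub_nonpos.2 (not_lt.1 (filter_eq_empty_iff.1 hempty hi)))
    rw [hzero, mul_zero]
    exact sum_nonneg fun k _ => posPart_nonneg _
  · obtain ⟨j, hj, hmin⟩ := exists_min_image _ f hne
    obtain ⟨hjs, haj⟩ := mem_filter.1 hj
    have hfewer : #{i ∈ s | f j < f i} < n := by
      rw [← hn]
      have hsub : {i ∈ s | f j < f i} ⊆ {i ∈ s | a < f i} :=
        monotone_filter_right s fun i _ hi => haj.trans hi
      exact card_lt_card ((ssubset_iff_of_subset hsub).2 ⟨j, hj, by simp⟩)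
    have habove : c * ∑ i ∈ s, (f i - f j)⁺ ≤ ∑ k ∈ t, (g k - f j)⁺ :=
      ih _ hfewer (f j) (fun i hi hji => hcard i hi (haj.trans hji)) rfl
    calc c * ∑ i ∈ s, (f i - a)⁺
        = (f j - a) * (c * #{i ∈ s | f j ≤ f i}) + c * ∑ i ∈ s, (f i - f j)⁺ := by
          rw [sum_posPart_eq_sub_mul_card_superlevel_add s f haj.le
            fun i hi hai => hmin i (mem_filter.2 ⟨hi, hai⟩)]
          ring
      _ ≤ (f j - a) * #{k ∈ t | f j ≤ g k} + ∑ k ∈ t, (g k - f j)⁺ :=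
          add_le_add (mul_le_mul_of_nonneg_left (hcard j hjs haj) (sub_nonneg.2 haj.le))
            habove
      _ ≤ ∑ k ∈ t, (g k - a)⁺ := sub_mul_card_superlevel_add_sum_posPart_le t g haj.le

end SuperlevelSums

lemma biUnion_superlevel_subset {K ι α : Type*} [Preorder K] [DecidableLE K] [DecidableEq α]
    (V : Finset α) (E : Finset ι) (edge : ι → Finset α) (hEV : ∀ e ∈ E, edge e ⊆ V)
    (y : ι → K) (x : α → K) (hxy : ∀ e ∈ E, ∀ i ∈ edge e, y e ≤ x i) (r : K) :
    {e ∈ E | r ≤ y e}.biUnion edge ⊆ {i ∈ V | r ≤ x i} := by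
  refine biUnion_subset.2 fun e he i hi => ?_
  obtain ⟨heE, hre⟩ := mem_filter.1 he
  exact mem_filter.2 ⟨hEV e heE hi, hre.trans (hxy e heE i hi)⟩

section Threshold

variable {K ι κ α : Type*} [Field K] [LinearOrder K] [IsStrictOrderedRing K]

lemma exists_card_superlevel_mul_sum_le (s : Finset ι) (t : Finset κ) (f : ι → K) (g : κ → K)
    (hf : 0 < ∑ i ∈ s, f i) (hg : ∀ k ∈ t, 0 ≤ g k) :
    ∃ r, 0 < r ∧ {i ∈ s | r ≤ f i}.Nonempty ∧
      #{k ∈ t | r ≤ g k} * ∑ i ∈ s, f i ≤ (∑ k ∈ t, g k) * #{i ∈ s | r ≤ f i} := by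
  have hpos : {i ∈ s | 0 < f i}.Nonempty := by
    obtain ⟨i, hi, hfi⟩ := exists_lt_of_sum_lt (sum_const_zero.trans_lt hf)
    exact ⟨i, mem_filter.2 ⟨hi, hfi⟩⟩
  let ratio (r : K) : K := #{k ∈ t | r ≤ g k} / #{i ∈ s | r ≤ f i}
  obtain ⟨j, hj, hmin⟩ := exists_min_image _ (fun i => ratio (f i)) hpos
  obtain ⟨hjs, hj0⟩ := mem_filter.1 hj
  have hcard_pos (i) (hi : i ∈ s) : (0 : K) < #{l ∈ s | f i ≤ f l} :=
    Nat.cast_pos.2 (card_pos.2 ⟨i, mem_filter.2 ⟨hi, le_rfl⟩⟩)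
  have hsum : ratio (f j) * ∑ i ∈ s, f i ≤ ∑ k ∈ t, g k :=
    calc ratio (f j) * ∑ i ∈ s, f i
        ≤ ratio (f j) * ∑ i ∈ s, (f i - 0)⁺ := by
          have hratio : 0 ≤ ratio (f j) := by positivity
          gcongr with i
          simpa only [sub_zero] using le_posPart (f i)
      _ ≤ ∑ k ∈ t, (g k - 0)⁺ :=
          mul_sum_posPart_le_of_mul_card_superlevel_le s t f g _ 0 fun i hi hi0 =>
            (le_div_iff₀ (hcard_pos i hi)).1 (hmin i (mem_filter.2 ⟨hi, hi0⟩))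
      _ = ∑ k ∈ t, g k := sum_congr rfl fun k hk => by
          rw [sub_zero, posPart_of_nonneg (hg k hk)]
  refine ⟨f j, hj0, ⟨j, mem_filter.2 ⟨hjs, le_rfl⟩⟩, ?_⟩
  rwa [← div_le_iff₀ (hcard_pos j hjs), mul_div_right_comm]

theorem stmt_3_general [DecidableEq α] (V : Finset α) (E : Finset ι) (edge : ι → Finset α)
    (hEV : ∀ e ∈ E, edge e ⊆ V) (y : ι → K) (hsum : 0 < ∑ e ∈ E, y e)
    (x : α → K) (hx : ∀ i ∈ V, 0 ≤ x i) (hxy : ∀ e ∈ E, ∀ i ∈ edge e, y e ≤ x i) :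
    ∃ r, 0 < r ∧ {e ∈ E | r ≤ y e}.Nonempty ∧
      #({e ∈ E | r ≤ y e}.biUnion edge) * ∑ e ∈ E, y e ≤
        (∑ i ∈ V, x i) * #{e ∈ E | r ≤ y e} := by
  obtain ⟨r, hr, hne, hle⟩ := exists_card_superlevel_mul_sum_le E V y x hsum hx
  refine ⟨r, hr, hne, le_trans ?_ hle⟩
  gcongr
  exact biUnion_superlevel_subset V E edge hEV y x hxy r

end Threshold

/-- Rounding the LP for minimum expansion: given a feasible LP solution
`(x, y)`, there is a threshold `r > 0` such that the nonempty set
`E₀ = {e ∈ E : y_e ≥ r}` satisfies `|⋃_{e∈E₀} e| ≤ (∑_i x_i)·|E₀|`. -/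
theorem stmt_3 {α : Type*} [Fintype α] [DecidableEq α]
    (E : Finset (Finset α)) (hE : E.Nonempty)
    (y : Finset α → ℝ) (hy : ∀ e ∈ E, 0 ≤ y e) (hsum : ∑ e ∈ E, y e = 1)
    (x : α → ℝ) (hx : ∀ i : α, 0 ≤ x i) (hxy : ∀ e ∈ E, ∀ i ∈ e, y e ≤ x i) :
    ∃ r : ℝ, 0 < r ∧ (E.filter (fun e => r ≤ y e)).Nonempty ∧
      (((E.filter (fun e => r ≤ y e)).biUnion id).card : ℝ) ≤
        (∑ i : α, x i) * ((E.filter (fun e => r ≤ y e)).card : ℝ) := by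
  simpa only [hsum, mul_one] using
    stmt_3_general univ E id (fun e _ => subset_univ e) y (hsum ▸ one_pos) x (fun i _ => hx i) hxy
end

section
/- Let H = (V,E) be a hypergraph with V and E finite and E nonempty. Then the infimum of ∑_{i∈V} x_i over all pairs (x,y), where y : E → ℝ is nonnegative with ∑_{e∈E} y_e = 1 and x : V → ℝ is nonnegative with x_i ≥ y_e whenever e ∈ E and i ∈ e, equals the minimum over all nonempty subsets E' ⊆ E of |⋃_{e∈E'} e| / |E'|. -/
open Finset

/-!
Giving weight `1 / |J|` to the edges of `J` and to the vertices they cover turns the expansion of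
`J` into a value of the relaxation. Conversely, let `m` be the least expansion and `(x, y)` a
feasible point. For every threshold `t`, the edges with `y ≥ t` cover only vertices with `x ≥ t`, so
there are at least `m` times as many of these vertices as of these edges. Integrating over `t ≥ 0`
gives `m = m * ∑ y ≤ ∑ x`; since only the finitely many values of `y` matter as thresholds,
the integration is an induction that adds the edges in decreasing order of `y`.
-/

section WeakDuality

variable {K ι α : Type*} [CommRing K] [LinearOrder K] [IsOrderedRing K] [DecidableEq α]
  {e : ι → Finset α} {I : Finset ι} {m : K} {x : α → K} {y : ι → K}

-- The lower bound `c` is what the induction varies: a new edge `a` of least weight lowers it from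
-- `y a`, and the strip between `c` and `y a` contributes `(y a - c)` times the two cardinalities.
lemma mul_sum_sub_le_sum_biUnion_sub (hm : ∀ J ⊆ I, m * #J ≤ #(J.biUnion e))
    (hxy : ∀ i ∈ I, ∀ v ∈ e i, y i ≤ x v) {c : K} (hc : ∀ i ∈ I, c ≤ y i) :
    m * ∑ i ∈ I, (y i - c) ≤ ∑ v ∈ I.biUnion e, (x v - c) := by
  classical
  induction I using Finset.induction_on_min_value y generalizing c with
  | empty => simp
  | insert a s ha_notMem ha ih =>
    set I := insert a s
    have ih_s : m * ∑ i ∈ s, (y i - y a) ≤ ∑ v ∈ s.biUnion e, (x v - y a) :=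
      ih (fun J hJ ↦ hm J (hJ.trans (subset_insert a s)))
        (fun i hi ↦ hxy i (mem_insert_of_mem hi)) ha
    have le_of_mem_biUnion : ∀ v ∈ I.biUnion e, y a ≤ x v := by
      intro v hv
      obtain ⟨i, hi, hvi⟩ := mem_biUnion.mp hv
      have hai : y a ≤ y i := (mem_insert.mp hi).elim (fun h ↦ h ▸ le_rfl) (ha i)
      exact hai.trans (hxy i hi v hvi)
    have sum_above : m * ∑ i ∈ I, (y i - y a) ≤ ∑ v ∈ I.biUnion e, (x v - y a) :=
      calc m * ∑ i ∈ I, (y i - y a) = m * ∑ i ∈ s, (y i - y a) := by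
            rw [sum_insert ha_notMem, sub_self, zero_add]
        _ ≤ ∑ v ∈ s.biUnion e, (x v - y a) := ih_s
        _ ≤ ∑ v ∈ I.biUnion e, (x v - y a) :=
            sum_le_sum_of_subset_of_nonneg (biUnion_subset_biUnion_of_subset_left e
              (subset_insert a s)) fun v hv _ ↦ sub_nonneg.mpr (le_of_mem_biUnion v hv)
    have strip : m * #I * (y a - c) ≤ #(I.biUnion e) * (y a - c) :=
      mul_le_mul_of_nonneg_right (hm I Subset.rfl) (sub_nonneg.mpr (hc a (mem_insert_self a s)))
    simp only [sum_sub_distrib, sum_const, nsmul_eq_mul] at sum_above ⊢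
    linear_combination sum_above + strip

lemma mul_sum_le_sum_biUnion (hm : ∀ J ⊆ I, m * #J ≤ #(J.biUnion e))
    (hxy : ∀ i ∈ I, ∀ v ∈ e i, y i ≤ x v) (hy : ∀ i ∈ I, 0 ≤ y i) :
    m * ∑ i ∈ I, y i ≤ ∑ v ∈ I.biUnion e, x v := by
  simpa only [sub_zero] using mul_sum_sub_le_sum_biUnion_sub hm hxy hy

end WeakDuality

section Expansion

variable (K : Type*) {ι α : Type*} [Field K] [DecidableEq α] (e : ι → Finset α) (I : Finset ι)

/-- The expansions of the nonempty subfamilies of `(e i)_{i ∈ I}`. Edges are indexed, so that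
repeated edges count with their multiplicity. -/
def expansionValues : Set K :=
  {s | ∃ J ⊆ I, J.Nonempty ∧ s = (#(J.biUnion e) : K) / (#J : K)}

variable [LinearOrder K]

/-- The objective values at the feasible points `(x, y)` of the linear programming relaxation of
minimum expansion, where `x` weights the vertices and `y` the edges `(e i)_{i ∈ I}`. Values of `y`
outside `I` are irrelevant. -/
def relaxationValues [Fintype α] : Set K :=
  {s | ∃ (x : α → K) (y : ι → K),
    (∀ i ∈ I, 0 ≤ y i) ∧ (∑ i ∈ I, y i = 1) ∧ (∀ v, 0 ≤ x v) ∧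
    (∀ i ∈ I, ∀ v ∈ e i, y i ≤ x v) ∧ s = ∑ v, x v}

variable {K e I} {m : K}

variable (e) in
lemma exists_isLeast_expansionValues (hI : I.Nonempty) :
    ∃ m : K, IsLeast (expansionValues K e I) m := by
  classical
  obtain ⟨J, hJ, hmin⟩ := exists_min_image {J ∈ I.powerset | J.Nonempty}
    (fun J ↦ (#(J.biUnion e) : K) / (#J : K)) ⟨I, by simpa using hI⟩
  simp only [mem_filter, mem_powerset] at hJ hmin
  refine ⟨_, ⟨J, hJ.1, hJ.2, rfl⟩, ?_⟩
  rintro _ ⟨J', hJ'I, hJ', rfl⟩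
  exact hmin J' ⟨hJ'I, hJ'⟩

variable [IsStrictOrderedRing K]

lemma mul_card_le_card_biUnion_of_mem_lowerBounds (hm : m ∈ lowerBounds (expansionValues K e I))
    {J : Finset ι} (hJI : J ⊆ I) : m * #J ≤ #(J.biUnion e) := by
  obtain rfl | hJ := J.eq_empty_or_nonempty
  · simp
  · have card_pos : (0 : K) < #J := mod_cast hJ.card_pos
    exact (le_div_iff₀ card_pos).mp (hm ⟨J, hJI, hJ, rfl⟩)

variable [Fintype α]

lemma expansionValues_subset_relaxationValues :
    expansionValues K e I ⊆ relaxationValues K e I := by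
  classical
  rintro _ ⟨J, hJI, hJ, rfl⟩
  have card_ne_zero : (#J : K) ≠ 0 := mod_cast hJ.card_ne_zero
  have inv_nonneg : 0 ≤ (#J : K)⁻¹ := by positivity
  refine ⟨fun v ↦ if v ∈ J.biUnion e then (#J : K)⁻¹ else 0,
    fun i ↦ if i ∈ J then (#J : K)⁻¹ else 0,
    fun i _ ↦ ite_nonneg inv_nonneg le_rfl, ?_, fun v ↦ ite_nonneg inv_nonneg le_rfl, ?_, ?_⟩
  · rw [sum_ite_mem, inter_eq_right.mpr hJI, sum_const, nsmul_eq_mul, mul_inv_cancel₀ card_ne_zero]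
  · intro i _ v hv
    by_cases hi : i ∈ J
    · have hvJ : v ∈ J.biUnion e := mem_biUnion.mpr ⟨i, hi, hv⟩
      simp only [hi, hvJ, if_true, le_refl]
    · simpa only [hi, if_false] using ite_nonneg inv_nonneg le_rfl
  · rw [sum_ite_mem, univ_inter, sum_const, nsmul_eq_mul, div_eq_mul_inv]

lemma lowerBounds_expansionValues_subset :
    lowerBounds (expansionValues K e I) ⊆ lowerBounds (relaxationValues K e I) := by
  rintro m hm _ ⟨x, y, hy, hy_sum, hx, hxy, rfl⟩
  calc m = m * ∑ i ∈ I, y i := by rw [hy_sum, mul_one]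
    _ ≤ ∑ v ∈ I.biUnion e, x v := mul_sum_le_sum_biUnion
        (fun _ ↦ mul_card_le_card_biUnion_of_mem_lowerBounds hm) hxy hy
    _ ≤ ∑ v, x v := sum_le_univ_sum_of_nonneg hx

variable (e) in
theorem stmt_4_general (hI : I.Nonempty) :
    ∃ m : K, IsLeast (relaxationValues K e I) m ∧ IsLeast (expansionValues K e I) m := by
  obtain ⟨m, hm⟩ := exists_isLeast_expansionValues (K := K) e hI
  exact ⟨m, ⟨expansionValues_subset_relaxationValues hm.1,
    lowerBounds_expansionValues_subset hm.2⟩, hm⟩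

end Expansion

/-- The optimal value of the LP relaxation for minimum expansion equals
the minimum expansion `|⋃_{e∈E'} e| / |E'|` over nonempty subsets `E' ⊆ E`. -/
theorem stmt_4 {α : Type*} [Fintype α] [DecidableEq α]
    (E : Finset (Finset α)) (hE : E.Nonempty) :
    sInf {s : ℝ | ∃ (x : α → ℝ) (y : Finset α → ℝ),
        (∀ e ∈ E, 0 ≤ y e) ∧ (∑ e ∈ E, y e = 1) ∧ (∀ i : α, 0 ≤ x i) ∧
        (∀ e ∈ E, ∀ i ∈ e, y e ≤ x i) ∧ s = ∑ i : α, x i} =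
      sInf {s : ℝ | ∃ E' ⊆ E, E'.Nonempty ∧
        s = ((E'.biUnion id).card : ℝ) / (E'.card : ℝ)} := by
  obtain ⟨_, h_relaxation, h_expansion⟩ := stmt_4_general (K := ℝ) id hE
  exact h_relaxation.csInf_eq.trans h_expansion.csInf_eq.symm
end

section
/- Let H = (V,E) be a 3-uniform hypergraph with |V| = n, let s be an integer with 1 ≤ s ≤ n, let Δ ≥ 0, and let K₁ ⊆ V with |K₁| = s be such that every vertex of K₁ has degree at least Δ in H. Then there exist sets K₂, K₃ ⊆ V with |K₂| = |K₃| = s such that the number of hyperedges of H contained in K₁ ∪ K₂ ∪ K₃ is at least Δ·s³/(27·n²). -/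
open Finset

/-!
At least `sΔ / 3` hyperedges meet `K₁`, since a hyperedge is counted by at most three vertices of
`K₁`, and each of them has at most two vertices outside `K₁`. Choose one such vertex in each
hyperedge. The `s` vertices chosen most often form a set `K₂` containing the chosen vertex of at
least a fraction `s / n` of these hyperedges, which therefore have at most one vertex outside
`K₁ ∪ K₂`. Repeating the choice gives `K₃` and the factor `(s / n)²`, hence the bound
`Δs³ / (3n²)`.
-/

theorem exists_subset_card_eq_nsmul_sum_le {ι M : Type*} [AddCommMonoid M] [LinearOrder M]
    [IsOrderedAddMonoid M] (w : ι → M) (A : Finset ι) {s : ℕ} (hs : s ≤ #A) :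
    ∃ L ⊆ A, #L = s ∧ s • ∑ x ∈ A, w x ≤ #A • ∑ x ∈ L, w x := by
  classical
  induction A using Finset.induction_on_min_value w with
  | empty => exact ⟨∅, subset_rfl, (Nat.le_zero.mp hs).symm, by simp⟩
  | insert a A ha hmin ih =>
    obtain rfl | hlt := hs.eq_or_lt
    · exact ⟨insert a A, subset_rfl, rfl, le_rfl⟩
    · have hsA : s ≤ #A := by rw [card_insert_of_notMem ha] at hlt; omega
      obtain ⟨L, hLA, hLcard, hL⟩ := ih hsA
      have hmin_le : s • w a ≤ ∑ x ∈ L, w x :=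
        hLcard ▸ card_nsmul_le_sum L w (w a) fun x hx => hmin x (hLA hx)
      refine ⟨L, hLA.trans (subset_insert a A), hLcard, ?_⟩
      rw [sum_insert ha, card_insert_of_notMem ha, nsmul_add, succ_nsmul']
      exact add_le_add hmin_le hL

theorem card_sdiff_le_of_inter_nonempty {α : Type*} [DecidableEq α] {A B : Finset α} {k : ℕ}
    (hA : #A ≤ k + 1) (hAB : (A ∩ B).Nonempty) : #(A \ B) ≤ k := by
  have := card_sdiff_add_card_inter A B
  have := hAB.card_pos
  omega

theorem filter_filter_sdiff_subset {α β : Type*} [DecidableEq α] (T : Finset β)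
    (g : β → Finset α) (A B : Finset α) {p : β → Prop} [DecidablePred p] :
    {t ∈ {t ∈ T | p t} | g t \ A ⊆ B} ⊆ {t ∈ T | g t ⊆ A ∪ B} := by
  intro t ht
  obtain ⟨htp, hsub⟩ := mem_filter.mp ht
  exact mem_filter.mpr ⟨(mem_filter.mp htp).1, sdiff_le_iff.mp hsub⟩

section Selection

variable {α β : Type*} [Fintype α] [DecidableEq α] {s : ℕ}

theorem exists_card_eq_mul_card_le_card_filter_mem (T : Finset β) (f : β → α)
    (hs : s ≤ Fintype.card α) :
    ∃ L : Finset α, #L = s ∧ s * #T ≤ Fintype.card α * #{t ∈ T | f t ∈ L} := by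
  obtain ⟨L, -, hLcard, hL⟩ := exists_subset_card_eq_nsmul_sum_le
    (fun x => #{t ∈ T | f t = x}) univ hs
  refine ⟨L, hLcard, ?_⟩
  simpa only [smul_eq_mul, sum_card_fiberwise_eq_card_filter, mem_univ, filter_true,
    card_univ] using hL

variable [Nonempty α]

theorem exists_card_eq_mul_card_le_card_filter_card_sdiff_le (T : Finset β) (g : β → Finset α)
    {k : ℕ} (hg : ∀ t ∈ T, #(g t) ≤ k + 1) (hs : s ≤ Fintype.card α) :
    ∃ L : Finset α, #L = s ∧ s * #T ≤ Fintype.card α * #{t ∈ T | #(g t \ L) ≤ k} := by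
  obtain ⟨L, hLcard, hL⟩ :=
    exists_card_eq_mul_card_le_card_filter_mem T (fun t => Classical.epsilon (· ∈ g t)) hs
  refine ⟨L, hLcard, hL.trans ?_⟩
  refine Nat.mul_le_mul_left _ (card_le_card fun t ht => ?_)
  obtain ⟨htT, htL⟩ := mem_filter.mp ht
  refine mem_filter.mpr ⟨htT, ?_⟩
  obtain hempty | hne := (g t).eq_empty_or_nonempty
  · simp [hempty]
  · exact card_sdiff_le_of_inter_nonempty (hg t htT)
      ⟨_, mem_inter.mpr ⟨Classical.epsilon_spec hne, htL⟩⟩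

theorem exists_card_eq_pow_mul_card_le_card_filter_subset_biUnion (T : Finset β)
    (g : β → Finset α) {k : ℕ} (hg : ∀ t ∈ T, #(g t) ≤ k) (hs : s ≤ Fintype.card α) :
    ∃ L : Fin k → Finset α, (∀ i, #(L i) = s) ∧
      s ^ k * #T ≤ Fintype.card α ^ k * #{t ∈ T | g t ⊆ univ.biUnion L} := by
  induction k generalizing T g with
  | zero =>
    refine ⟨Fin.elim0, fun i => i.elim0, ?_⟩
    have hfilter : {t ∈ T | g t ⊆ univ.biUnion Fin.elim0} = T :=
      filter_true_of_mem fun t ht => by simp [card_eq_zero.mp (Nat.le_zero.mp (hg t ht))]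
    rw [hfilter, pow_zero, pow_zero]
  | succ k ih =>
    obtain ⟨L₀, hL₀card, hL₀⟩ := exists_card_eq_mul_card_le_card_filter_card_sdiff_le T g hg hs
    obtain ⟨L, hLcard, hL⟩ := ih {t ∈ T | #(g t \ L₀) ≤ k} (fun t => g t \ L₀)
      fun t ht => (mem_filter.mp ht).2
    have hunion : univ.biUnion (Fin.cons L₀ L : Fin (k + 1) → Finset α) =
        L₀ ∪ univ.biUnion L := by
      ext x
      simp [Fin.exists_fin_succ]
    refine ⟨Fin.cons L₀ L, Fin.cases hL₀card hLcard, ?_⟩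
    calc s ^ (k + 1) * #T = s ^ k * (s * #T) := by ring
      _ ≤ s ^ k * (Fintype.card α * #{t ∈ T | #(g t \ L₀) ≤ k}) := by gcongr
      _ = Fintype.card α * (s ^ k * #{t ∈ T | #(g t \ L₀) ≤ k}) := by ring
      _ ≤ Fintype.card α * (Fintype.card α ^ k *
            #{t ∈ {t ∈ T | #(g t \ L₀) ≤ k} | g t \ L₀ ⊆ univ.biUnion L}) := by gcongr
      _ ≤ Fintype.card α * (Fintype.card α ^ k *
            #{t ∈ T | g t ⊆ univ.biUnion (Fin.cons L₀ L : Fin (k + 1) → Finset α)}) := by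
        rw [hunion]
        gcongr
        exact filter_filter_sdiff_subset T g L₀ (univ.biUnion L)
      _ = _ := by ring

end Selection

section Hypergraph

variable {α : Type*} [DecidableEq α] {E : Finset (Finset α)} {K : Finset α}

theorem card_mul_le_mul_card_filter_inter_nonempty {d r : ℕ} (hr : ∀ e ∈ E, #e ≤ r)
    (hdeg : ∀ v ∈ K, d ≤ #{e ∈ E | v ∈ e}) :
    #K * d ≤ r * #{e ∈ E | (K ∩ e).Nonempty} :=
  calc #K * d ≤ ∑ e ∈ E, #(K ∩ e) := le_sum_card_inter hdeg
    _ = ∑ e ∈ E with (K ∩ e).Nonempty, #(K ∩ e) :=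
      (sum_filter_of_ne fun e _ he => card_ne_zero.mp he).symm
    _ ≤ #{e ∈ E | (K ∩ e).Nonempty} • r := sum_le_card_nsmul _ _ _ fun e he =>
      (card_le_card inter_subset_right).trans (hr e (mem_filter.mp he).1)
    _ = r * #{e ∈ E | (K ∩ e).Nonempty} := by rw [smul_eq_mul, mul_comm]

theorem exists_card_eq_mul_card_pow_le_card_filter_subset_union [Fintype α] [Nonempty α] {d k : ℕ}
    (hr : ∀ e ∈ E, #e ≤ k + 1) (hdeg : ∀ v ∈ K, d ≤ #{e ∈ E | v ∈ e}) :
    ∃ L : Fin k → Finset α, (∀ i, #(L i) = #K) ∧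
      d * #K ^ (k + 1) ≤
        (k + 1) * Fintype.card α ^ k * #{e ∈ E | e ⊆ K ∪ univ.biUnion L} := by
  have hsdiff : ∀ e ∈ ({e ∈ E | (K ∩ e).Nonempty} : Finset (Finset α)), #(e \ K) ≤ k := by
    intro e he
    obtain ⟨heE, hKe⟩ := mem_filter.mp he
    exact card_sdiff_le_of_inter_nonempty (hr e heE) (inter_comm K e ▸ hKe)
  obtain ⟨L, hLcard, hL⟩ := exists_card_eq_pow_mul_card_le_card_filter_subset_biUnion
    {e ∈ E | (K ∩ e).Nonempty} (· \ K) hsdiff (card_le_univ K)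
  refine ⟨L, hLcard, ?_⟩
  calc d * #K ^ (k + 1) = #K ^ k * (#K * d) := by ring
    _ ≤ #K ^ k * ((k + 1) * #{e ∈ E | (K ∩ e).Nonempty}) := by
      gcongr #K ^ k * ?_
      exact card_mul_le_mul_card_filter_inter_nonempty hr hdeg
    _ = (k + 1) * (#K ^ k * #{e ∈ E | (K ∩ e).Nonempty}) := by ring
    _ ≤ (k + 1) * (Fintype.card α ^ k *
          #{e ∈ {e ∈ E | (K ∩ e).Nonempty} | e \ K ⊆ univ.biUnion L}) := by gcongr
    _ ≤ (k + 1) * (Fintype.card α ^ k * #{e ∈ E | e ⊆ K ∪ univ.biUnion L}) := by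
      gcongr
      exact filter_filter_sdiff_subset E id K (univ.biUnion L)
    _ = _ := by ring

end Hypergraph

theorem stmt_5_general {α : Type*} [Fintype α] [DecidableEq α] [Nonempty α]
    (E : Finset (Finset α)) (k : ℕ) (hr : ∀ e ∈ E, #e ≤ k + 1) (Δ : ℝ) (K₁ : Finset α)
    (hdeg : ∀ v ∈ K₁, Δ ≤ #{e ∈ E | v ∈ e}) :
    ∃ L : Fin k → Finset α, (∀ i, #(L i) = #K₁) ∧
      Δ * (#K₁ : ℝ) ^ (k + 1) / ((k + 1) * (Fintype.card α : ℝ) ^ k) ≤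
        #{e ∈ E | e ⊆ K₁ ∪ univ.biUnion L} := by
  obtain ⟨L, hLcard, hL⟩ := exists_card_eq_mul_card_pow_le_card_filter_subset_union hr
    fun v hv => Nat.ceil_le.mpr (hdeg v hv)
  refine ⟨L, hLcard, ?_⟩
  rw [div_le_iff₀' (by positivity)]
  calc Δ * (#K₁ : ℝ) ^ (k + 1) ≤ ⌈Δ⌉₊ * (#K₁ : ℝ) ^ (k + 1) := by
        gcongr
        exact Nat.le_ceil Δ
    _ ≤ _ := mod_cast hL

/-- In a 3-uniform hypergraph on `n` vertices, if every vertex of a set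
`K₁` of `s` vertices has degree at least `Δ`, then there are sets `K₂, K₃` of `s` vertices
each such that at least `Δ·s³/(27·n²)` hyperedges are contained in `K₁ ∪ K₂ ∪ K₃`. -/
theorem stmt_5 {α : Type*} [Fintype α] [DecidableEq α]
    (E : Finset (Finset α)) (h3 : ∀ e ∈ E, e.card = 3)
    (n : ℕ) (hn : n = Fintype.card α)
    (s : ℕ) (hs1 : 1 ≤ s) (hs2 : s ≤ n)
    (Δ : ℝ) (hΔ : 0 ≤ Δ)
    (K₁ : Finset α) (hK₁ : K₁.card = s)
    (hdeg : ∀ v ∈ K₁, Δ ≤ ((E.filter (fun e => v ∈ e)).card : ℝ)) :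
    ∃ K₂ K₃ : Finset α, K₂.card = s ∧ K₃.card = s ∧
      Δ * (s : ℝ) ^ 3 / (27 * (n : ℝ) ^ 2) ≤
        ((E.filter (fun e => e ⊆ K₁ ∪ K₂ ∪ K₃)).card : ℝ) := by
  subst hn hK₁
  have : Nonempty α := Fintype.card_pos_iff.mp (hs1.trans hs2)
  obtain ⟨L, hLcard, hL⟩ := stmt_5_general E 2 (fun e he => (h3 e he).le) Δ K₁ hdeg
  have hunion : K₁ ∪ univ.biUnion L = K₁ ∪ L 0 ∪ L 1 := by
    ext x
    simp [Fin.exists_fin_two]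
  refine ⟨L 0, L 1, hLcard 0, hLcard 1, hunion ▸ le_trans ?_ hL⟩
  gcongr
  norm_num
end

section
/- Let G be a finite simple graph with at most Δ edges, let k ≥ 1 be an integer and q > 0 a real number, and suppose there is a vertex set S with |S| ≤ k such that the induced subgraph G[S] has at least q edges. Then there exists a vertex set U such that the induced subgraph G[U] has minimum degree at least q/(2k), |U| ≤ 4·Δ·k/q, and the induced subgraph G[S ∩ U] has more than q/2 edges. -/
open Finset

/-! It suffices to prune inside `S`. Put `t = q / (2k)` and delete from `S`, as long as possible, a
vertex with fewer than `t` neighbours among the remaining vertices. At most `k` vertices are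
deleted, each destroying fewer than `t` edges, so the surviving set `U` still spans at least
`q - kt = q / 2` edges; in particular it is not empty, so fewer than `k` vertices were deleted and
the inequality is strict. Finally `|U| ≤ k`, while `q ≤ Δ` because `G` contains the edges of
`G[S]`. -/

section Pruning

variable {α : Type*} (G : SimpleGraph α)

/-- The edges of the induced subgraph `G[W]`, as unordered pairs of vertices of `G` rather than of
the subtype `W`, so that the edge sets for different `W` can be compared. -/
def inducedEdgeSet (W : Set α) : Set (Sym2 α) :=
  {e ∈ G.edgeSet | ∀ v ∈ e, v ∈ W}

theorem inducedEdgeSet_empty : inducedEdgeSet G ∅ = ∅ :=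
  Set.eq_empty_of_forall_notMem fun e he ↦ he.2 _ e.out_fst_mem

theorem inducedEdgeSet_subset_edgeSet (W : Set α) : inducedEdgeSet G W ⊆ G.edgeSet :=
  Set.sep_subset _ _

theorem inducedEdgeSet_subset_sdiff_singleton_union (W : Set α) (u : α) :
    inducedEdgeSet G W ⊆ inducedEdgeSet G (W \ {u}) ∪ (s(u, ·)) '' (W ∩ G.neighborSet u) := by
  rintro e ⟨heG, heW⟩
  by_cases hue : u ∈ e
  · obtain ⟨v, rfl⟩ := hue
    exact .inr ⟨v, ⟨heW v (Sym2.mem_mk_right u v), heG⟩, rfl⟩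
  · exact .inl ⟨heG, fun v hv ↦ ⟨heW v hv, ne_of_mem_of_not_mem hv hue⟩⟩

variable {W S : Set α}

theorem finite_inducedEdgeSet (hW : W.Finite) : (inducedEdgeSet G W).Finite :=
  hW.toFinset.sym2.finite_toSet.subset fun _ he ↦
    Finset.mem_sym2_iff.2 fun v hv ↦ hW.mem_toFinset.2 (he.2 v hv)

theorem ncard_inducedEdgeSet_le_add_ncard_inter_neighborSet (hW : W.Finite) (u : α) :
    (inducedEdgeSet G W).ncard ≤
      (inducedEdgeSet G (W \ {u})).ncard + (W ∩ G.neighborSet u).ncard := by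
  have hdiff : (inducedEdgeSet G (W \ {u})).Finite := finite_inducedEdgeSet G hW.sdiff
  have hnbr : (W ∩ G.neighborSet u).Finite := hW.inter_of_left _
  calc (inducedEdgeSet G W).ncard
      ≤ (inducedEdgeSet G (W \ {u}) ∪ (s(u, ·)) '' (W ∩ G.neighborSet u)).ncard :=
        Set.ncard_le_ncard (inducedEdgeSet_subset_sdiff_singleton_union G W u)
          (hdiff.union (hnbr.image _))
    _ ≤ (inducedEdgeSet G (W \ {u})).ncard + ((s(u, ·)) '' (W ∩ G.neighborSet u)).ncard :=
        Set.ncard_union_le _ _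
    _ ≤ (inducedEdgeSet G (W \ {u})).ncard + (W ∩ G.neighborSet u).ncard := by
        gcongr
        exact Set.ncard_image_le hnbr

theorem exists_subset_le_ncard_inter_neighborSet (hS : S.Finite) (t : ℝ) :
    ∃ U ⊆ S, (∀ u ∈ U, t ≤ (U ∩ G.neighborSet u).ncard) ∧
      (inducedEdgeSet G S).ncard - t * S.ncard ≤ (inducedEdgeSet G U).ncard - t * U.ncard := by
  induction hn : S.ncard generalizing S with
  | zero =>
    obtain rfl := (Set.ncard_eq_zero hS).1 hn
    exact ⟨∅, subset_rfl, by simp⟩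
  | succ n ih =>
    by_cases hdeg : ∀ u ∈ S, t ≤ (S ∩ G.neighborSet u).ncard
    · exact ⟨S, subset_rfl, hdeg, by rw [hn]⟩
    push Not at hdeg
    obtain ⟨u, huS, hu⟩ := hdeg
    have hcard : (S \ {u}).ncard = n := by
      rw [Set.ncard_sdiff_singleton_of_mem huS, hn, Nat.add_sub_cancel]
    obtain ⟨U, hUS, hUdeg, hUedges⟩ := ih hS.sdiff hcard
    have hedges : ((inducedEdgeSet G S).ncard : ℝ) ≤
        (inducedEdgeSet G (S \ {u})).ncard + (S ∩ G.neighborSet u).ncard :=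
      mod_cast ncard_inducedEdgeSet_le_add_ncard_inter_neighborSet G hS u
    refine ⟨U, hUS.trans Set.sdiff_subset, hUdeg, ?_⟩
    push_cast
    linarith

theorem exists_subset_le_ncard_inter_neighborSet_of_mul_ncard_lt (hS : S.Finite) {t : ℝ}
    (ht : 0 < t) (hedges : t * S.ncard < (inducedEdgeSet G S).ncard) :
    ∃ U ⊆ S, (∀ u ∈ U, t ≤ (U ∩ G.neighborSet u).ncard) ∧
      (inducedEdgeSet G S).ncard - t * S.ncard < (inducedEdgeSet G U).ncard := by
  obtain ⟨U, hUS, hUdeg, hUedges⟩ := exists_subset_le_ncard_inter_neighborSet G hS t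
  have hU : U.Nonempty := by
    rw [Set.nonempty_iff_ne_empty]
    rintro rfl
    simp only [inducedEdgeSet_empty, Set.ncard_empty, Nat.cast_zero, mul_zero] at hUedges
    linarith
  have hUcard : (0 : ℝ) < U.ncard := mod_cast hU.ncard_pos (hS.subset hUS)
  exact ⟨U, hUS, hUdeg, by linarith [mul_pos ht hUcard]⟩

end Pruning

theorem stmt_6_general {α : Type*} (G : SimpleGraph α) (hG : G.edgeSet.Finite)
    (Δ : ℝ) (hΔ : (G.edgeSet.ncard : ℝ) ≤ Δ) (k : ℕ) (hk : 1 ≤ k) (q : ℝ) (hq : 0 < q)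
    (S : Set α) (hSfin : S.Finite) (hS : S.ncard ≤ k)
    (hSedges : q ≤ ((inducedEdgeSet G S).ncard : ℝ)) :
    ∃ U ⊆ S, (∀ u ∈ U, q / (2 * k) ≤ ((U ∩ G.neighborSet u).ncard : ℝ)) ∧
      (U.ncard : ℝ) ≤ Δ * k / q ∧ q / 2 < ((inducedEdgeSet G U).ncard : ℝ) := by
  have hk' : (0 : ℝ) < k := mod_cast hk
  have hdeleted : q / (2 * k) * S.ncard ≤ q / 2 :=
    calc q / (2 * k) * S.ncard ≤ q / (2 * k) * k := by gcongr
      _ = q / 2 := by rw [div_mul_eq_mul_div, mul_div_mul_right _ _ hk'.ne']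
  obtain ⟨U, hUS, hUdeg, hUedges⟩ :=
    exists_subset_le_ncard_inter_neighborSet_of_mul_ncard_lt G hSfin
      (show 0 < q / (2 * k) by positivity) (by linarith)
  have hUk : (U.ncard : ℝ) ≤ k := mod_cast (Set.ncard_le_ncard hUS hSfin).trans hS
  have hqΔ : q ≤ Δ :=
    calc q ≤ (inducedEdgeSet G S).ncard := hSedges
      _ ≤ G.edgeSet.ncard := mod_cast Set.ncard_le_ncard (inducedEdgeSet_subset_edgeSet G S) hG
      _ ≤ Δ := hΔ
  refine ⟨U, hUS, hUdeg, ?_, by linarith⟩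
  calc (U.ncard : ℝ) ≤ k := hUk
    _ = q * k / q := (mul_div_cancel_left₀ _ hq.ne').symm
    _ ≤ Δ * k / q := by gcongr

/-- Pruning low-degree vertices: if a graph `G` has at most `Δ` edges and
contains a vertex set `S` of at most `k` vertices inducing at least `q` edges, then there
is a vertex set `U` such that `G[U]` has minimum degree at least `q/(2k)`,
`|U| ≤ 4Δk/q`, and `G[S ∩ U]` has more than `q/2` edges. -/
theorem stmt_6 {α : Type*} [Fintype α]
    (G : SimpleGraph α) (Δ : ℝ) (hΔ : (G.edgeSet.ncard : ℝ) ≤ Δ)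
    (k : ℕ) (hk : 1 ≤ k) (q : ℝ) (hq : 0 < q)
    (S : Set α) (hS : S.ncard ≤ k)
    (hSedges : q ≤ ({e ∈ G.edgeSet | ∀ v ∈ e, v ∈ S}.ncard : ℝ)) :
    ∃ U : Set α,
      (∀ u ∈ U, q / (2 * k) ≤ ({v ∈ U | G.Adj u v}.ncard : ℝ)) ∧
      (U.ncard : ℝ) ≤ 4 * Δ * k / q ∧
      q / 2 < ({e ∈ G.edgeSet | ∀ v ∈ e, v ∈ S ∩ U}.ncard : ℝ) := by
  obtain ⟨U, hUS, hUdeg, hUcard, hUedges⟩ :=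
    stmt_6_general G G.edgeSet.toFinite Δ hΔ k hk q hq S S.toFinite hS hSedges
  have hΔ₀ : 0 ≤ Δ := (Nat.cast_nonneg _).trans hΔ
  refine ⟨U, hUdeg, hUcard.trans ?_, by rwa [Set.inter_eq_right.2 hUS]⟩
  gcongr
  exact le_mul_of_one_le_left hΔ₀ (by norm_num)
end

section
/- For all real numbers α and β with 0 < α ≤ 1 and β ≥ α, we have min( 2 − α − β , α·(2 − α/min(β,1)) ) ≤ 4·(4 − √3)/13. -/
/-!
For fixed `α`, the bound `α * (2 - α / γ) ≤ 2 * (1 - t) * α + t ^ 2 * γ` holds for every slope `t`.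
At `t = √3 - 1` the two coefficients coincide, so both exponents are controlled by the
single quantity `x = α + γ`: one is at most `2 - x`, the other at most `t ^ 2 * x`. A decreasing
and an increasing linear function have their largest minimum where they cross.
-/

section LinearOrderedField

variable {K : Type*} [Field K] [LinearOrder K] [IsStrictOrderedRing K]

theorem mul_two_sub_div_le_linear (a t : K) {b : K} (hb : 0 < b) :
    a * (2 - a / b) ≤ 2 * (1 - t) * a + t ^ 2 * b := by
  have gap_eq : 2 * (1 - t) * a + t ^ 2 * b - a * (2 - a / b) = (a - t * b) ^ 2 / b := by
    field_simp
    ring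
  have gap_nonneg : 0 ≤ (a - t * b) ^ 2 / b := by positivity
  linarith

theorem min_sub_mul_le_div (a x : K) {m : K} (hm : 0 ≤ m) :
    min (a - x) (m * x) ≤ m * a / (1 + m) := by
  rw [le_div_iff₀ (by positivity)]
  calc min (a - x) (m * x) * (1 + m)
      = m * min (a - x) (m * x) + min (a - x) (m * x) := by ring
    _ ≤ m * (a - x) + m * x := by
        gcongr
        · exact min_le_left _ _
        · exact min_le_right _ _
    _ = m * a := by ring

end LinearOrderedField

theorem two_mul_one_sub_sqrt_three_sub_one :
    2 * (1 - (√3 - 1)) = (√3 - 1) ^ 2 := by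
  linear_combination -Real.sq_sqrt (zero_le_three (α := ℝ))

theorem sq_sqrt_three_sub_one_mul_two_div :
    (√3 - 1) ^ 2 * 2 / (1 + (√3 - 1) ^ 2) = 4 * (4 - √3) / 13 := by
  rw [div_eq_div_iff (by positivity) (by norm_num)]
  linear_combination (2 + 4 * √3) * Real.sq_sqrt (zero_le_three (α := ℝ))

theorem stmt_8_general (α : ℝ) {β γ : ℝ} (hγ : 0 < γ) (hγβ : γ ≤ β) :
    min (2 - α - β) (α * (2 - α / γ)) ≤ 4 * (4 - √3) / 13 := by
  have first_le : 2 - α - β ≤ 2 - (α + γ) := by linarith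
  have second_le : α * (2 - α / γ) ≤ (√3 - 1) ^ 2 * (α + γ) := by
    calc α * (2 - α / γ)
        ≤ 2 * (1 - (√3 - 1)) * α + (√3 - 1) ^ 2 * γ := mul_two_sub_div_le_linear α _ hγ
      _ = (√3 - 1) ^ 2 * (α + γ) := by rw [two_mul_one_sub_sqrt_three_sub_one, mul_add]
  calc min (2 - α - β) (α * (2 - α / γ))
      ≤ min (2 - (α + γ)) ((√3 - 1) ^ 2 * (α + γ)) := min_le_min first_le second_le
    _ ≤ (√3 - 1) ^ 2 * 2 / (1 + (√3 - 1) ^ 2) := min_sub_mul_le_div _ _ (sq_nonneg _)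
    _ = 4 * (4 - √3) / 13 := sq_sqrt_three_sub_one_mul_two_div

/-- The exponent trade-off for Densest `k`-Subhypergraph in 3-uniform
hypergraphs: for `0 < α ≤ 1` and `β ≥ α`,
`min(2 − α − β, α(2 − α/min(β,1))) ≤ 4(4 − √3)/13`. -/
theorem stmt_8 (α β : ℝ) (hα0 : 0 < α) (hα1 : α ≤ 1) (hαβ : α ≤ β) :
    min (2 - α - β) (α * (2 - α / min β 1)) ≤ 4 * (4 - Real.sqrt 3) / 13 :=
  stmt_8_general α (lt_min (hα0.trans_le hαβ) one_pos) (min_le_left β 1)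
end

section
/- For all positive real numbers Δ, d, k, n with d ≤ k², we have max( Δ·k²/n² , d²/(Δ·k) , 1 ) ≥ d / n^{4/5}. -/
section MaxPow

variable {R : Type*} [Semiring R] [LinearOrder R] [IsOrderedRing R] {a b c : R}

theorem pow_mul_pow_le_max_pow (ha : 0 ≤ a) (hb : 0 ≤ b) (p q : ℕ) :
    a ^ p * b ^ q ≤ max a b ^ (p + q) :=
  calc
    a ^ p * b ^ q ≤ max a b ^ p * max a b ^ q := by
      gcongr
      · exact le_max_left a b
      · exact le_max_right a b
    _ = max a b ^ (p + q) := (pow_add _ p q).symm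

theorem pow_mul_pow_mul_pow_le_max_pow (ha : 0 ≤ a) (hb : 0 ≤ b) (hc : 0 ≤ c) (p q r : ℕ) :
    a ^ p * b ^ q * c ^ r ≤ max (max a b) c ^ (p + q + r) :=
  calc
    a ^ p * b ^ q * c ^ r ≤ max a b ^ (p + q) * c ^ r := by
      gcongr
      exact pow_mul_pow_le_max_pow ha hb p q
    _ ≤ max (max a b) c ^ (p + q + r) :=
      pow_mul_pow_le_max_pow (ha.trans (le_max_left a b)) hc (p + q) r

end MaxPow

section DegreeBounds

variable {K : Type*} [Field K] {Δ k : K}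

theorem div_sq_mul_div_eq (hΔ : Δ ≠ 0) (hk : k ≠ 0) (d n : K) :
    Δ * k ^ 2 / n ^ 2 * (d ^ 2 / (Δ * k)) = d ^ 2 * k / n ^ 2 := by
  field_simp

theorem pow_five_div_pow_four_le [LinearOrder K] [IsStrictOrderedRing K] (hΔ : Δ ≠ 0)
    (hk : k ≠ 0) {d : K} (hdk : d ≤ k ^ 2) (n : K) :
    d ^ 5 / n ^ 4 ≤ (Δ * k ^ 2 / n ^ 2) ^ 2 * (d ^ 2 / (Δ * k)) ^ 2 :=
  calc
    d ^ 5 / n ^ 4 = d ^ 4 * d / n ^ 4 := by rw [← pow_succ]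
    _ ≤ d ^ 4 * k ^ 2 / n ^ 4 := by gcongr
    _ = (d ^ 2 * k / n ^ 2) ^ 2 := by ring
    _ = (Δ * k ^ 2 / n ^ 2) ^ 2 * (d ^ 2 / (Δ * k)) ^ 2 := by
      rw [← mul_pow, div_sq_mul_div_eq hΔ hk]

end DegreeBounds

theorem rpow_natCast_div_natCast_pow {x : ℝ} (hx : 0 ≤ x) (p : ℕ) {q : ℕ} (hq : q ≠ 0) :
    (x ^ ((p : ℝ) / q)) ^ q = x ^ p := by
  rw [← Real.rpow_mul_natCast hx, div_mul_cancel₀ _ (Nat.cast_ne_zero.mpr hq), Real.rpow_natCast]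

/-- For positive reals `Δ, d, k, n` with `d ≤ k²`,
`max(Δk²/n², d²/(Δk), 1) ≥ d/n^{4/5}`. -/
theorem stmt_10 (Δ d k n : ℝ) (hΔ : 0 < Δ) (hd : 0 < d) (hk : 0 < k) (hn : 0 < n)
    (hdk : d ≤ k ^ 2) :
    d / n ^ ((4 : ℝ) / 5) ≤ max (max (Δ * k ^ 2 / n ^ 2) (d ^ 2 / (Δ * k))) 1 := by
  have root_pow : (n ^ ((4 : ℝ) / 5)) ^ 5 = n ^ 4 :=
    mod_cast rpow_natCast_div_natCast_pow hn.le 4 (q := 5) (by norm_num)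
  refine le_of_pow_le_pow_left₀ (n := 5) (by norm_num) (by positivity) ?_
  calc
    (d / n ^ ((4 : ℝ) / 5)) ^ 5 = d ^ 5 / n ^ 4 := by rw [div_pow, root_pow]
    -- Weighting the three entries by `2, 2, 1` cancels `Δ` and leaves `d ^ 4 * k ^ 2 / n ^ 4`.
    _ ≤ (Δ * k ^ 2 / n ^ 2) ^ 2 * (d ^ 2 / (Δ * k)) ^ 2 * 1 ^ 1 := by
      simpa only [one_pow, mul_one] using pow_five_div_pow_four_le hΔ.ne' hk.ne' hdk n
    _ ≤ max (max (Δ * k ^ 2 / n ^ 2) (d ^ 2 / (Δ * k))) 1 ^ 5 :=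
      pow_mul_pow_mul_pow_le_max_pow (by positivity) (by positivity) zero_le_one 2 2 1
end

section
/- Let H = (V,E) be a 3-uniform hypergraph, let K₁ ⊆ V, let k ≥ 1 be an integer, and let K ⊆ V with |K| ≤ k. Let P be the set of hyperedges e ∈ E such that e ⊆ K and |e ∩ K₁| ≥ 2. Then there exists a set W ⊆ K with |W| ≤ ⌈2k/3⌉ such that the number of hyperedges of H contained in K₁ ∪ W is at least 2·|P|/9. -/
open Finset

/-! An edge of `P` has at most one vertex outside `K₁`. Charge it to that vertex, if there is one,
and let `W` consist of the `⌈2|K|/3⌉` vertices of `K` charged most often: `W` receives at least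
`2/3` of all charges, and every edge charged to a vertex of `W` lies in `K₁ ∪ W`, as does every
edge inside `K₁`. Charging each edge only once gives the ratio `2/3`; counting it at all of its
vertices through the `K₁`-weights costs a further factor of `3`, whence the `2/9` of the
theorem. -/

section HeaviestSubset

variable {α : Type*}

theorem exists_subset_card_eq_forall_sdiff_le [DecidableEq α] {β : Type*} [LinearOrder β]
    (w : α → β) {s : Finset α} {m : ℕ} (hm : m ≤ #s) :
    ∃ t ⊆ s, #t = m ∧ ∀ x ∈ t, ∀ y ∈ s \ t, w y ≤ w x := by
  induction m with
  | zero => exact ⟨∅, empty_subset s, card_empty, by simp⟩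
  | succ m ih =>
    obtain ⟨t, hts, htm, htop⟩ := ih (by omega)
    have hne : (s \ t).Nonempty := sdiff_nonempty_of_card_lt_card (by omega)
    obtain ⟨u, hu, hmax⟩ := exists_max_image (s \ t) w hne
    obtain ⟨hus, hut⟩ := mem_sdiff.1 hu
    refine ⟨insert u t, insert_subset hus hts, by rw [card_insert_of_notMem hut, htm], ?_⟩
    intro x hx y hy
    have hyt : y ∈ s \ t := sdiff_subset_sdiff Subset.rfl (subset_insert u t) hy
    obtain rfl | hxt := mem_insert.1 hx
    · exact hmax y hyt
    · exact htop x hxt y hyt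

theorem card_nsmul_sum_le_card_nsmul_sum_of_forall_sdiff_le [DecidableEq α] {M : Type*}
    [AddCommMonoid M] [Preorder M] [IsOrderedAddMonoid M] {w : α → M} {s t : Finset α}
    (hts : t ⊆ s) (htop : ∀ x ∈ t, ∀ y ∈ s \ t, w y ≤ w x) :
    #t • ∑ u ∈ s, w u ≤ #s • ∑ u ∈ t, w u := by
  have hcross : #t • ∑ y ∈ s \ t, w y ≤ #(s \ t) • ∑ x ∈ t, w x :=
    calc #t • ∑ y ∈ s \ t, w y = ∑ _x ∈ t, ∑ y ∈ s \ t, w y := (sum_const _).symm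
      _ ≤ ∑ x ∈ t, ∑ _y ∈ s \ t, w x := sum_le_sum fun x hx => sum_le_sum (htop x hx)
      _ = #(s \ t) • ∑ x ∈ t, w x := by simp only [sum_const, sum_nsmul]
  calc #t • ∑ u ∈ s, w u = #t • ∑ y ∈ s \ t, w y + #t • ∑ x ∈ t, w x := by
        rw [← sum_sdiff hts, nsmul_add]
    _ ≤ #(s \ t) • ∑ x ∈ t, w x + #t • ∑ x ∈ t, w x := by gcongr
    _ = #s • ∑ x ∈ t, w x := by rw [← add_nsmul, card_sdiff_add_card_eq_card hts]

theorem exists_subset_card_eq_ceil_mul_sum_le {𝕜 : Type*} [Field 𝕜] [LinearOrder 𝕜]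
    [IsStrictOrderedRing 𝕜] [FloorSemiring 𝕜] {w : α → 𝕜} {s : Finset α}
    (hw : ∀ u ∈ s, 0 ≤ w u) {c : 𝕜} (hc : c ≤ 1) :
    ∃ t ⊆ s, #t = ⌈c * #s⌉₊ ∧ c * ∑ u ∈ s, w u ≤ ∑ u ∈ t, w u := by
  classical
  have hceil : ⌈c * #s⌉₊ ≤ #s := Nat.ceil_le.2 (mul_le_of_le_one_left (Nat.cast_nonneg _) hc)
  obtain ⟨t, hts, htcard, htop⟩ := exists_subset_card_eq_forall_sdiff_le w hceil
  refine ⟨t, hts, htcard, ?_⟩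
  obtain rfl | hs := s.eq_empty_or_nonempty
  · simp [subset_empty.1 hts]
  have hspos : (0 : 𝕜) < #s := by exact_mod_cast hs.card_pos
  refine le_of_mul_le_mul_left ?_ hspos
  calc #s * (c * ∑ u ∈ s, w u) = c * #s * ∑ u ∈ s, w u := by ring
    _ ≤ #t * ∑ u ∈ s, w u := by
        rw [htcard]
        exact mul_le_mul_of_nonneg_right (Nat.le_ceil _) (sum_nonneg hw)
    _ ≤ #s * ∑ u ∈ t, w u := by
        simpa only [nsmul_eq_mul] using
          card_nsmul_sum_le_card_nsmul_sum_of_forall_sdiff_le hts htop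

end HeaviestSubset

section Hypergraph

variable {α : Type*} [DecidableEq α]

/-- The number of hyperedges in `E` whose only vertex outside `A` is `u`. For `u ∉ A` and a
3-uniform `E` this is the `A`-weight of `u`; unlike the `A`-weight, it is zero for `u ∈ A`, so that
no hyperedge is counted at two vertices. -/
def outerWeight (E : Finset (Finset α)) (A : Finset α) (u : α) : ℕ :=
  #{e ∈ E | e \ A = {u}}

theorem subset_union_and_card_sdiff_le_one_iff {e A W : Finset α} :
    e ⊆ A ∪ W ∧ #(e \ A) ≤ 1 ↔ e ⊆ A ∨ ∃ u ∈ W, e \ A = {u} := by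
  rw [← sup_eq_union, ← sdiff_le_iff, ← sdiff_eq_empty_iff_subset (s := e) (t := A),
    Nat.le_one_iff_eq_zero_or_eq_one, card_eq_zero, card_eq_one]
  constructor
  · rintro ⟨hW, hempty | ⟨u, hu⟩⟩
    · exact Or.inl hempty
    · exact Or.inr ⟨u, singleton_subset_iff.1 (hu ▸ hW), hu⟩
  · rintro (hempty | ⟨u, huW, hu⟩)
    · exact ⟨hempty ▸ empty_subset W, Or.inl hempty⟩
    · exact ⟨hu ▸ singleton_subset_iff.2 huW, Or.inr ⟨u, hu⟩⟩

theorem card_filter_subset_union_and_card_sdiff_le_one (E : Finset (Finset α)) (A W : Finset α) :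
    #{e ∈ E | e ⊆ A ∪ W ∧ #(e \ A) ≤ 1} = #{e ∈ E | e ⊆ A} + ∑ u ∈ W, outerWeight E A u := by
  have hunion : {e ∈ E | e ⊆ A ∪ W ∧ #(e \ A) ≤ 1} =
      {e ∈ E | e ⊆ A} ∪ W.biUnion fun u => {e ∈ E | e \ A = {u}} := by
    ext e
    simp only [subset_union_and_card_sdiff_le_one_iff, mem_filter, mem_union, mem_biUnion]
    tauto
  have hinside : Disjoint {e ∈ E | e ⊆ A} (W.biUnion fun u => {e ∈ E | e \ A = {u}}) := by
    refine (disjoint_biUnion_right _ _ _).2 fun u _ => disjoint_filter.2 fun e _ heA hu => ?_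
    exact singleton_ne_empty u (hu ▸ sdiff_eq_empty_iff_subset.2 heA)
  have houter : (W : Set α).PairwiseDisjoint fun u => {e ∈ E | e \ A = {u}} :=
    fun u _ v _ huv => disjoint_filter.2 fun e _ hu hv => huv (singleton_injective (hu ▸ hv))
  rw [hunion, card_union_of_disjoint hinside, card_biUnion houter]
  rfl

theorem filter_le_card_inter_subset_filter_card_sdiff_le_one {E : Finset (Finset α)} {r : ℕ}
    (hE : ∀ e ∈ E, #e ≤ r + 1) (A K : Finset α) :
    {e ∈ E | e ⊆ K ∧ r ≤ #(e ∩ A)} ⊆ {e ∈ E | e ⊆ A ∪ K ∧ #(e \ A) ≤ 1} := by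
  intro e he
  obtain ⟨heE, heK, hinter⟩ := mem_filter.1 he
  have hcard := hE e heE
  rw [← card_sdiff_add_card_inter e A] at hcard
  exact mem_filter.2 ⟨heE, heK.trans subset_union_right, by omega⟩

theorem stmt_11_general {𝕜 : Type*} [Field 𝕜] [LinearOrder 𝕜] [IsStrictOrderedRing 𝕜]
    [FloorSemiring 𝕜] {c : 𝕜} (hc : c ≤ 1) (E : Finset (Finset α)) (K₁ K : Finset α) :
    ∃ W ⊆ K, #W = ⌈c * #K⌉₊ ∧
      c * #{e ∈ E | e ⊆ K₁ ∪ K ∧ #(e \ K₁) ≤ 1} ≤ (#{e ∈ E | e ⊆ K₁ ∪ W} : 𝕜) := by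
  obtain ⟨W, hWK, hWcard, hWsum⟩ := exists_subset_card_eq_ceil_mul_sum_le (s := K)
    (w := fun u => (outerWeight E K₁ u : 𝕜)) (fun _ _ => Nat.cast_nonneg _) hc
  refine ⟨W, hWK, hWcard, ?_⟩
  calc c * (#{e ∈ E | e ⊆ K₁ ∪ K ∧ #(e \ K₁) ≤ 1} : 𝕜)
      = c * #{e ∈ E | e ⊆ K₁} + c * ∑ u ∈ K, (outerWeight E K₁ u : 𝕜) := by
        rw [card_filter_subset_union_and_card_sdiff_le_one]
        push_cast
        ring
    _ ≤ #{e ∈ E | e ⊆ K₁} + ∑ u ∈ W, (outerWeight E K₁ u : 𝕜) :=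
        add_le_add (mul_le_of_le_one_left (Nat.cast_nonneg _) hc) hWsum
    _ = #{e ∈ E | e ⊆ K₁ ∪ W ∧ #(e \ K₁) ≤ 1} := by
        rw [card_filter_subset_union_and_card_sdiff_le_one]
        push_cast
        rfl
    _ ≤ #{e ∈ E | e ⊆ K₁ ∪ W} := by
        gcongr with e
        exact And.left

end Hypergraph

/-- In a 3-uniform hypergraph, if `P` is the set of hyperedges contained
in `K` (where `|K| ≤ k`) meeting `K₁` in at least two vertices, then some `W ⊆ K` with
`|W| ≤ ⌈2k/3⌉` is such that at least `2|P|/9` hyperedges are contained in `K₁ ∪ W`. -/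
theorem stmt_11 {α : Type*} [DecidableEq α]
    (V : Finset α) (E : Finset (Finset α)) (hEV : ∀ e ∈ E, e ⊆ V)
    (h3 : ∀ e ∈ E, e.card = 3)
    (K₁ : Finset α) (hK₁ : K₁ ⊆ V)
    (k : ℕ) (hk : 1 ≤ k) (K : Finset α) (hKV : K ⊆ V) (hK : K.card ≤ k) :
    ∃ W ⊆ K, W.card ≤ ⌈(2 * (k : ℚ)) / 3⌉₊ ∧
      2 * ((E.filter (fun e => e ⊆ K ∧ 2 ≤ (e ∩ K₁).card)).card : ℝ) / 9 ≤
        ((E.filter (fun e => e ⊆ K₁ ∪ W)).card : ℝ) := by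
  have hP := (Nat.cast_le (α := ℝ)).2 <|
    card_le_card <| filter_le_card_inter_subset_filter_card_sdiff_le_one
      (r := 2) (fun e he => (h3 e he).le) K₁ K
  obtain ⟨W, hWK, hWcard, hW⟩ := stmt_11_general (c := (2 / 3 : ℝ)) (by norm_num) E K₁ K
  refine ⟨W, hWK, hWcard.trans_le (Nat.ceil_le.2 ?_), by linarith⟩
  calc (2 / 3 : ℝ) * #K ≤ 2 / 3 * k := by gcongr
    _ = ((2 * (k : ℚ) / 3 : ℚ) : ℝ) := by push_cast; ring
    _ ≤ ⌈(2 * (k : ℚ)) / 3⌉₊ := by exact_mod_cast Nat.le_ceil (2 * (k : ℚ) / 3)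
end

section
/- Let H be an interval hypergraph with nonempty hyperedges e₁, …, e_m indexed so that their maximal elements satisfy b₁ ≤ ⋯ ≤ b_m, where b_i denotes the largest element of e_i. For 1 ≤ i ≤ m let C_i = { i' : i' ≤ i and e_{i'} ⊆ e_i } (so i ∈ C_i), and for 1 ≤ j ≤ i let A(i,j) denote the minimum of |⋃_{s∈S} e_s| over all sets S ⊆ {1,…,i} with |S| = j and i ∈ S (with the convention A(i',j') = ∞ when j' > i'). Then: (a) for every j with 1 ≤ j ≤ |C_i|, A(i,j) = |e_i|; and (b) for every j with |C_i| < j ≤ i, A(i,j) = min over i' ∈ {1,…,i−1} ∖ C_i of ( A(i', j − |C_i ∖ C_{i'}|) + |e_i ∖ e_{i'}| ). -/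
open Finset

/-- The dynamic-programming value `A(i,j)`: the minimum of `|⋃_{s∈S} e_s|` over sets `S`
of `j` indices, all at most `i`, with `i ∈ S`; `⊤` (i.e. `∞`) if no such `S` exists. -/
noncomputable def DPval (m : ℕ) (e : Fin m → Finset ℕ) (i : Fin m) (j : ℕ) : ℕ∞ :=
  sInf {c : ℕ∞ | ∃ S : Finset (Fin m), (∀ s ∈ S, s ≤ i) ∧ S.card = j ∧ i ∈ S ∧
    c = ((S.biUnion e).card : ℕ∞)}

/-- The set `C_i` of indices `i' ≤ i` with `e_{i'} ⊆ e_i`. -/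
def Cset (m : ℕ) (e : Fin m → Finset ℕ) (i : Fin m) : Finset (Fin m) :=
  Finset.univ.filter (fun i' => i' ≤ i ∧ e i' ⊆ e i)

/-!
Let `e k` come before `e i` in the order without being contained in `e i`. Since right endpoints
are nondecreasing, `e k` reaches further left than `e i`, so it contains every vertex that `e i`
shares with an edge up to `e k`. Hence a solution with last index `k` covers no vertex of
`e i \ e k` and uses no index of `C_i \ C_k`: adjoining these indices extends it to last index `i`
by `|C_i \ C_k|` edges at the price of `|e i \ e k|` vertices. Conversely, given a solution with
last index `i` and more than `|C_i|` edges, let `k` be its last index outside `C_i`; dropping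
`C_i \ C_k` leaves a solution with last index `k`, up to edges inside `e k`, which are free.
-/

variable {ι α : Type*}

/-- The structural property of interval hypergraphs, listed by right endpoints, on which the
dynamic program rests: an edge `e k` contains whatever an earlier edge shares with a later edge
`e i`, unless `e k` lies inside `e i`. -/
def IsSweepOrdered [Preorder ι] [DecidableEq α] (e : ι → Finset α) : Prop :=
  ∀ ⦃s k i⦄, s ≤ k → k ≤ i → ¬e k ⊆ e i → e s ∩ e i ⊆ e k

/-- The value `A(i, j)` for an arbitrary indexed hypergraph: the least size of the union of `j`
edges whose last index is `i`, and `⊤` if there are no such `j` edges. -/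
noncomputable def minUnionCard [Preorder ι] [DecidableEq α] (e : ι → Finset α) (i : ι) (j : ℕ) :
    ℕ∞ :=
  ⨅ (S : Finset ι) (_ : IsGreatest (S : Set ι) i ∧ #S = j), (#(S.biUnion e) : ℕ∞)

/-- The set `C_i` for an arbitrary indexed hypergraph: the indices up to `i` of the edges inside
`e i`. -/
def containedIndices [Preorder ι] [LocallyFiniteOrderBot ι] [DecidableEq α] (e : ι → Finset α)
    (i : ι) : Finset ι :=
  {k ∈ Iic i | e k ⊆ e i}

section IntervalTraces

variable [LinearOrder α]

theorem exists_mem_le_of_max_le_max {s t : Finset α} (h : s.max ≤ t.max) {v : α} (hv : v ∈ s) :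
    ∃ w ∈ t, v ≤ w := by
  obtain ⟨w, hw, hvw⟩ := WithBot.coe_le_iff.1 ((le_max hv).trans h)
  exact ⟨w, mem_of_max hw, hvw⟩

theorem isSweepOrdered_of_ordConnected [Preorder ι] {V : Set α} {e : ι → Finset α}
    (hint : ∀ i, ∃ I : Set α, I.OrdConnected ∧ (e i : Set α) = V ∩ I)
    (hmax : Monotone fun i => (e i).max) : IsSweepOrdered e := by
  intro s k i hsk hki hk v hv
  obtain ⟨hvs, hvi⟩ := mem_inter.1 hv
  obtain ⟨w, hwk, hwi⟩ := not_subset.1 hk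
  obtain ⟨y, hyk, hvy⟩ := exists_mem_le_of_max_le_max (hmax hsk) hvs
  obtain ⟨x, hxi, hwx⟩ := exists_mem_le_of_max_le_max (hmax hki) hwk
  obtain ⟨I, hI, hei⟩ := hint i
  obtain ⟨K, hK, hek⟩ := hint k
  simp only [← mem_coe, hei, hek, Set.mem_inter_iff] at hvi hwk hwi hyk hxi ⊢
  rcases le_total w v with hwv | hvw
  · exact ⟨hvi.1, hK.out hwk.2 hyk.2 ⟨hwv, hvy⟩⟩
  · exact absurd ⟨hwk.1, hI.out hvi.2 hxi.2 ⟨hvw, hwx⟩⟩ hwi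

theorem isSweepOrdered_of_eq_filter [Preorder ι] {V : Finset α} {e : ι → Finset α}
    (hne : ∀ i, (e i).Nonempty) (hint : ∀ i, ∃ a b : α, e i = {v ∈ V | a ≤ v ∧ v ≤ b})
    (hsort : ∀ i j, i ≤ j → (e i).max' (hne i) ≤ (e j).max' (hne j)) : IsSweepOrdered e := by
  refine isSweepOrdered_of_ordConnected (V := (V : Set α)) (fun i => ?_) fun i j hij => ?_
  · obtain ⟨a, b, hi⟩ := hint i
    exact ⟨Set.Icc a b, Set.ordConnected_Icc, by rw [hi, coe_filter]; rfl⟩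
  · simpa only [← coe_max' (hne _), WithBot.coe_le_coe] using hsort i j hij

end IntervalTraces

section MinUnionCard

variable [Preorder ι] [DecidableEq α] {e : ι → Finset α} {i : ι} {j : ℕ} {S : Finset ι}

theorem minUnionCard_le (hS : IsGreatest (S : Set ι) i) :
    minUnionCard e i #S ≤ #(S.biUnion e) :=
  iInf₂_le S ⟨hS, rfl⟩

theorem le_minUnionCard_add {a c : ℕ∞}
    (h : ∀ S : Finset ι, IsGreatest (S : Set ι) i → #S = j → a ≤ #(S.biUnion e) + c) :
    a ≤ minUnionCard e i j + c := by
  simp only [minUnionCard, ENat.iInf_add]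
  exact le_iInf₂ fun S hS => h S hS.1 hS.2

theorem card_le_minUnionCard : (#(e i) : ℕ∞) ≤ minUnionCard e i j :=
  le_iInf₂ fun _ hS => Nat.cast_le.2 (card_le_card (subset_biUnion_of_mem e hS.1.1))

theorem minUnionCard_le_of_le_card (hS : IsGreatest (S : Set ι) i) (hj : 1 ≤ j) (hjS : j ≤ #S) :
    minUnionCard e i j ≤ #(S.biUnion e) := by
  obtain ⟨T, hiT, hTS, rfl⟩ :=
    exists_subsuperset_card_eq (singleton_subset_iff.2 hS.1) (by simpa using hj) hjS
  have hT : IsGreatest (T : Set ι) i := ⟨singleton_subset_iff.1 hiT, fun s hs => hS.2 (hTS hs)⟩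
  exact (minUnionCard_le hT).trans
    (Nat.cast_le.2 (card_le_card (biUnion_subset_biUnion_of_subset_left e hTS)))

end MinUnionCard

section ContainedIndices

variable [Preorder ι] [LocallyFiniteOrderBot ι] [DecidableEq α]
  {e : ι → Finset α} {i k : ι} {j : ℕ}

theorem mem_containedIndices : k ∈ containedIndices e i ↔ k ≤ i ∧ e k ⊆ e i := by
  simp [containedIndices]

theorem not_subset_of_notMem_containedIndices (hki : k ≤ i) (hk : k ∉ containedIndices e i) :
    ¬e k ⊆ e i :=
  fun h => hk (mem_containedIndices.2 ⟨hki, h⟩)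

theorem isGreatest_containedIndices : IsGreatest (containedIndices e i : Set ι) i :=
  ⟨mem_containedIndices.2 ⟨le_rfl, subset_rfl⟩, fun _ hk => (mem_containedIndices.1 hk).1⟩

theorem biUnion_containedIndices : (containedIndices e i).biUnion e = e i :=
  (biUnion_subset.2 fun _ hk => (mem_containedIndices.1 hk).2).antisymm
    (subset_biUnion_of_mem e isGreatest_containedIndices.1)

theorem minUnionCard_eq_card (hj : 1 ≤ j) (hjC : j ≤ #(containedIndices e i)) :
    minUnionCard e i j = #(e i) := by
  refine le_antisymm ?_ card_le_minUnionCard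
  simpa only [biUnion_containedIndices] using
    minUnionCard_le_of_le_card (e := e) isGreatest_containedIndices hj hjC

end ContainedIndices

namespace IsSweepOrdered

section Preorder

variable [Preorder ι] [DecidableEq α] {e : ι → Finset α} {i k : ι} {S T : Finset ι}

theorem disjoint_biUnion_sdiff (he : IsSweepOrdered e) (hki : k ≤ i) (hk : ¬e k ⊆ e i)
    (hS : k ∈ upperBounds (S : Set ι)) : Disjoint (S.biUnion e) (e i \ e k) := by
  refine (disjoint_biUnion_left ..).2 fun s hs => disjoint_left.2 fun v hvs hv => ?_
  obtain ⟨hvi, hvk⟩ := mem_sdiff.1 hv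
  exact hvk (he (hS hs) hki hk (mem_inter.2 ⟨hvs, hvi⟩))

theorem card_biUnion_add_card_sdiff_le (he : IsSweepOrdered e) (hki : k ≤ i) (hk : ¬e k ⊆ e i)
    (hT : k ∈ upperBounds (T : Set ι)) (hTS : T.biUnion e ⊆ S.biUnion e) (hi : i ∈ S) :
    #(T.biUnion e) + #(e i \ e k) ≤ #(S.biUnion e) := by
  rw [← card_union_of_disjoint (he.disjoint_biUnion_sdiff hki hk hT)]
  exact card_le_card (union_subset hTS (sdiff_subset.trans (subset_biUnion_of_mem e hi)))

variable [DecidableEq ι] [LocallyFiniteOrderBot ι]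

theorem disjoint_containedIndices_sdiff (he : IsSweepOrdered e) (hki : k ≤ i) (hk : ¬e k ⊆ e i)
    (hS : k ∈ upperBounds (S : Set ι)) :
    Disjoint S (containedIndices e i \ containedIndices e k) := by
  refine disjoint_left.2 fun s hs hsC => ?_
  obtain ⟨hsi, hsk⟩ := mem_sdiff.1 hsC
  have hes : e s ⊆ e s ∩ e i := subset_inter subset_rfl (mem_containedIndices.1 hsi).2
  exact hsk (mem_containedIndices.2 ⟨hS hs, hes.trans (he (hS hs) hki hk)⟩)

theorem minUnionCard_add_le (he : IsSweepOrdered e) (hki : k < i) (hk : ¬e k ⊆ e i) (j : ℕ) :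
    minUnionCard e i (j + #(containedIndices e i \ containedIndices e k)) ≤
      minUnionCard e k j + #(e i \ e k) := by
  refine le_minUnionCard_add fun S hS hSj => ?_
  set D := containedIndices e i \ containedIndices e k
  have hcard : #(S ∪ D) = j + #D := by
    rw [card_union_of_disjoint (he.disjoint_containedIndices_sdiff hki.le hk hS.2), hSj]
  have hgreatest : IsGreatest (↑(S ∪ D) : Set ι) i := by
    have hi : i ∈ D := mem_sdiff.2
      ⟨isGreatest_containedIndices.1, fun h => hki.not_ge (mem_containedIndices.1 h).1⟩
    refine ⟨mem_union_right S hi, fun s hs => ?_⟩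
    rcases mem_union.1 hs with hs | hs
    · exact (hS.2 hs).trans hki.le
    · exact (mem_containedIndices.1 (mem_sdiff.1 hs).1).1
  have hDe : D.biUnion e ⊆ e i :=
    (biUnion_subset_biUnion_of_subset_left e sdiff_subset).trans biUnion_containedIndices.subset
  have hunion : (S ∪ D).biUnion e ⊆ S.biUnion e ∪ e i \ e k := by
    rw [union_biUnion]
    refine union_subset subset_union_left (hDe.trans fun v hv => ?_)
    by_cases hvk : v ∈ e k
    · exact mem_union_left _ (mem_biUnion.2 ⟨k, hS.1, hvk⟩)
    · exact mem_union_right _ (mem_sdiff.2 ⟨hv, hvk⟩)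
  rw [← hcard]
  refine (minUnionCard_le hgreatest).trans ?_
  exact_mod_cast (card_le_card hunion).trans (card_union_le _ _)

theorem minUnionCard_sub_add_le (he : IsSweepOrdered e) (hki : k ≤ i) (hiS : i ∈ S)
    (hkS : IsGreatest (↑(S \ containedIndices e i) : Set ι) k)
    (hcard : #(containedIndices e i) < #S) :
    minUnionCard e k (#S - #(containedIndices e i \ containedIndices e k)) + #(e i \ e k) ≤
      #(S.biUnion e) := by
  -- Padding with `C_i ∩ C_k` keeps enough indices, and costs nothing as these edges lie in `e k`.
  set T := S \ containedIndices e i ∪ containedIndices e i ∩ containedIndices e k with hT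
  have hTk : IsGreatest (T : Set ι) k := by
    refine ⟨mem_union_left _ hkS.1, fun s hs => ?_⟩
    rcases mem_union.1 hs with hs | hs
    · exact hkS.2 hs
    · exact (mem_containedIndices.1 (mem_inter.1 hs).2).1
  have hTS : T.biUnion e ⊆ S.biUnion e := by
    rw [union_biUnion]
    refine union_subset (biUnion_subset_biUnion_of_subset_left e sdiff_subset) ?_
    calc (containedIndices e i ∩ containedIndices e k).biUnion e
        ⊆ (containedIndices e k).biUnion e :=
          biUnion_subset_biUnion_of_subset_left e inter_subset_right
      _ = e k := biUnion_containedIndices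
      _ ⊆ S.biUnion e := subset_biUnion_of_mem e (mem_sdiff.1 hkS.1).1
  have hScard : #S ≤ #T + #(containedIndices e i \ containedIndices e k) := by
    refine (card_le_card fun s hs => ?_).trans (card_union_le T _)
    simp only [hT, mem_union, mem_sdiff, mem_inter]
    tauto
  have hCcard : #(containedIndices e i \ containedIndices e k) ≤ #(containedIndices e i) :=
    card_le_card sdiff_subset
  have hle : minUnionCard e k (#S - #(containedIndices e i \ containedIndices e k)) ≤
      #(T.biUnion e) := minUnionCard_le_of_le_card hTk (by lia) (by lia)
  have hk : ¬e k ⊆ e i := not_subset_of_notMem_containedIndices hki (mem_sdiff.1 hkS.1).2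
  refine (add_le_add_left hle _).trans ?_
  exact_mod_cast he.card_biUnion_add_card_sdiff_le hki hk hTk.2 hTS hiS

end Preorder

variable [LinearOrder ι] [LocallyFiniteOrderBot ι] [DecidableEq α]
  {e : ι → Finset α} {i : ι} {j : ℕ}

theorem minUnionCard_eq_iInf (he : IsSweepOrdered e) (hj : #(containedIndices e i) < j) :
    minUnionCard e i j =
      ⨅ (k : ι) (_ : k < i ∧ k ∉ containedIndices e i),
        (minUnionCard e k (j - #(containedIndices e i \ containedIndices e k)) + #(e i \ e k)) := by
  apply le_antisymm
  · refine le_iInf₂ fun k ⟨hki, hk⟩ => ?_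
    have hDj : #(containedIndices e i \ containedIndices e k) ≤ j :=
      (card_le_card sdiff_subset).trans hj.le
    simpa only [Nat.sub_add_cancel hDj] using he.minUnionCard_add_le hki
      (not_subset_of_notMem_containedIndices hki.le hk)
      (j - #(containedIndices e i \ containedIndices e k))
  · refine le_iInf₂ ?_
    rintro S ⟨hS, rfl⟩
    have hne : (S \ containedIndices e i).Nonempty :=
      sdiff_nonempty.2 fun h => hj.not_ge (card_le_card h)
    have hmax := isGreatest_max' _ hne
    set k := (S \ containedIndices e i).max' hne
    obtain ⟨hkS, hk⟩ := mem_sdiff.1 hmax.1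
    have hki : k < i :=
      (hS.2 hkS).lt_of_ne (ne_of_mem_of_not_mem isGreatest_containedIndices.1 hk).symm
    exact (iInf₂_le k ⟨hki, hk⟩).trans (he.minUnionCard_sub_add_le hki.le hS.1 hmax hj)

end IsSweepOrdered

section FinIndexed

variable {m : ℕ} {e : Fin m → Finset ℕ} {i : Fin m}

theorem DPval_eq_minUnionCard {j : ℕ} : DPval m e i j = minUnionCard e i j := by
  refine le_antisymm (le_iInf₂ fun S hS => sInf_le ⟨S, fun _ hs => hS.1.2 hs, hS.2, hS.1.1, rfl⟩)
    (le_sInf ?_)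
  rintro _ ⟨S, hSi, rfl, hi, rfl⟩
  exact minUnionCard_le ⟨hi, fun _ hs => hSi _ hs⟩

theorem Cset_eq_containedIndices : Cset m e i = containedIndices e i := by
  ext k
  simp [Cset, mem_containedIndices]

end FinIndexed

theorem stmt_12_general [LinearOrder ι] [LocallyFiniteOrderBot ι] [DecidableEq α]
    {e : ι → Finset α} (he : IsSweepOrdered e) (i : ι) :
    (∀ j : ℕ, 1 ≤ j → j ≤ #(containedIndices e i) → minUnionCard e i j = #(e i)) ∧
    (∀ j : ℕ, #(containedIndices e i) < j →
      minUnionCard e i j =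
        ⨅ (k : ι) (_ : k < i ∧ k ∉ containedIndices e i),
          (minUnionCard e k (j - #(containedIndices e i \ containedIndices e k)) +
            #(e i \ e k))) :=
  ⟨fun _ => minUnionCard_eq_card, fun _ => he.minUnionCard_eq_iInf⟩

/-- Correctness of the dynamic program for Minimum `p`-Union on interval
hypergraphs: the hyperedges `e_0, …, e_{m-1}` are nonempty intervals of the vertex set
`V ⊆ ℕ`, sorted by their largest elements. Then (a) `A(i,j) = |e_i|` for `1 ≤ j ≤ |C_i|`,
and (b) for `|C_i| < j ≤ i + 1` (with `0`-based indices, edges `e_0, …, e_i` number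
`i + 1`), `A(i,j)` is the minimum over `i' < i`, `i' ∉ C_i`, of
`A(i', j − |C_i ∖ C_{i'}|) + |e_i ∖ e_{i'}|`. -/
theorem stmt_12 (V : Finset ℕ) (m : ℕ) (e : Fin m → Finset ℕ)
    (hne : ∀ i, (e i).Nonempty)
    (hint : ∀ i, ∃ a b : ℕ, e i = V.filter (fun v => a ≤ v ∧ v ≤ b))
    (hsort : ∀ i j : Fin m, i ≤ j → (e i).max' (hne i) ≤ (e j).max' (hne j))
    (i : Fin m) :
    (∀ j : ℕ, 1 ≤ j → j ≤ (Cset m e i).card →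
      DPval m e i j = ((e i).card : ℕ∞)) ∧
    (∀ j : ℕ, (Cset m e i).card < j → j ≤ (i : ℕ) + 1 →
      DPval m e i j =
        ⨅ (i' : Fin m) (_ : i' < i ∧ i' ∉ Cset m e i),
          (DPval m e i' (j - ((Cset m e i) \ (Cset m e i')).card) +
            (((e i \ e i').card : ℕ∞)))) := by
  have he : IsSweepOrdered e := isSweepOrdered_of_eq_filter hne hint hsort
  simp only [DPval_eq_minUnionCard, Cset_eq_containedIndices]
  exact (stmt_12_general he i).imp_right fun hrec j hj _ => hrec j hj
end

section
/- For every real number α, the quantity 1 − 3α + 13α²/4 is positive, and 1 + α/2 − √(1 − 3α + 13α²/4) ≤ 4·(4 − √3)/13, with equality when α = (18 + 2√3)/39. -/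
/-!
The radicand is a product of two sums of two squares,
`((1/2)² + (√3)²) * ((α - 6/13)² + (4/13)²)`: the second factor is the completed square, and the
coefficient `13/4` is split so that `1/2` is the slope of `1 + α/2`. Cauchy–Schwarz for `(1/2, √3)`
and `(α - 6/13, 4/13)` then bounds the root below by `(α - 6/13)/2 + 4√3/13`, whose
dependence on `α` cancels that of `1 + α/2`. Equality holds when the two vectors are parallel, that
is, when `α - 6/13 = 2√3/39`.
-/

theorem mul_add_mul_le_sqrt_sq_add_sq_mul_sq_add_sq (a b c d : ℝ) :
    a * c + b * d ≤ √((a ^ 2 + b ^ 2) * (c ^ 2 + d ^ 2)) := by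
  apply Real.le_sqrt_of_sq_le
  rw [add_comm (c ^ 2), sq_add_sq_mul_sq_add_sq]
  exact le_add_of_nonneg_left (sq_nonneg _)

theorem sqrt_sq_add_sq_mul_sq_add_sq_eq_mul_add_mul_iff {a b c d : ℝ}
    (nonneg : 0 ≤ a * c + b * d) :
    √((a ^ 2 + b ^ 2) * (c ^ 2 + d ^ 2)) = a * c + b * d ↔ a * d = b * c := by
  rw [Real.sqrt_eq_iff_eq_sq (by positivity) nonneg, add_comm (c ^ 2), sq_add_sq_mul_sq_add_sq,
    add_eq_right, sq_eq_zero_iff, sub_eq_zero]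

theorem radicand_eq_sq_add_sq_mul_sq_add_sq (α : ℝ) :
    1 - 3 * α + 13 * α ^ 2 / 4 =
      ((1 / 2) ^ 2 + √3 ^ 2) * ((α - 6 / 13) ^ 2 + (4 / 13) ^ 2) := by
  rw [Real.sq_sqrt zero_le_three]
  ring

/-- For every real `α`, the quantity `1 − 3α + 13α²/4` is positive, and
`1 + α/2 − √(1 − 3α + 13α²/4) ≤ 4(4 − √3)/13`, with equality when
`α = (18 + 2√3)/39`. -/
theorem stmt_15 (α : ℝ) :
    0 < 1 - 3 * α + 13 * α ^ 2 / 4 ∧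
    1 + α / 2 - Real.sqrt (1 - 3 * α + 13 * α ^ 2 / 4) ≤ 4 * (4 - Real.sqrt 3) / 13 ∧
    (α = (18 + 2 * Real.sqrt 3) / 39 →
      1 + α / 2 - Real.sqrt (1 - 3 * α + 13 * α ^ 2 / 4) = 4 * (4 - Real.sqrt 3) / 13) := by
  rw [radicand_eq_sq_add_sq_mul_sq_add_sq]
  refine ⟨by positivity, ?_, fun hα ↦ ?_⟩
  · linarith [mul_add_mul_le_sqrt_sq_add_sq_mul_sq_add_sq (1 / 2) √3 (α - 6 / 13) (4 / 13)]
  · have shift : α - 6 / 13 = 2 * √3 / 39 := by linarith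
    have parallel : 1 / 2 * (4 / 13) = √3 * (α - 6 / 13) := by
      rw [shift]
      linear_combination (-2 / 39) * Real.sq_sqrt (zero_le_three (α := ℝ))
    have nonneg : 0 ≤ 1 / 2 * (α - 6 / 13) + √3 * (4 / 13) := by
      rw [shift]
      positivity
    linarith [(sqrt_sq_add_sq_mul_sq_add_sq_eq_mul_add_mul_iff nonneg).mpr parallel]
end
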